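/- arXiv:1211.3442 — 2 statements merged into one kernel-verified Lean document; each statement's English description precedes it below -/
import Mathlib

section
/- Let A(z) = Σ_{n≥0} |M_n(312)| zⁿ be the generating function (as a formal power series over ℚ) for 312-avoiding perfect matchings. Then A(z) satisfies the polynomial identity (2(1+4z)² A(z) − (1+36z))² = (1−12z)³; equivalently, A(z) = 54z / (1 + 36z − (1−12z)^{3/2}) = (1 + 36z + (1−12z)^{3/2}) / (2(1+4z)²). -/
/-! ### Patterns of length 3 and 4 as permutations (0-indexed values) -/

def p123 : Equiv.Perm (Fin 3) :=
  ⟨![0,1,2], ![0,1,2], by intro x; fin_cases x <;> rfl, by intro x; fin_cases x <;> rfl⟩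
def p132 : Equiv.Perm (Fin 3) :=
  ⟨![0,2,1], ![0,2,1], by intro x; fin_cases x <;> rfl, by intro x; fin_cases x <;> rfl⟩
def p213 : Equiv.Perm (Fin 3) :=
  ⟨![1,0,2], ![1,0,2], by intro x; fin_cases x <;> rfl, by intro x; fin_cases x <;> rfl⟩
def p231 : Equiv.Perm (Fin 3) :=
  ⟨![1,2,0], ![2,0,1], by intro x; fin_cases x <;> rfl, by intro x; fin_cases x <;> rfl⟩
def p312 : Equiv.Perm (Fin 3) :=
  ⟨![2,0,1], ![1,2,0], by intro x; fin_cases x <;> rfl, by intro x; fin_cases x <;> rfl⟩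
def p321 : Equiv.Perm (Fin 3) :=
  ⟨![2,1,0], ![2,1,0], by intro x; fin_cases x <;> rfl, by intro x; fin_cases x <;> rfl⟩
def p1342 : Equiv.Perm (Fin 4) :=
  ⟨![0,2,3,1], ![0,3,1,2], by intro x; fin_cases x <;> rfl, by intro x; fin_cases x <;> rfl⟩
def p1324 : Equiv.Perm (Fin 4) :=
  ⟨![0,2,1,3], ![0,2,1,3], by intro x; fin_cases x <;> rfl, by intro x; fin_cases x <;> rfl⟩

/-! ### Perfect matchings of `[2n] = {1, …, 2n}` as finsets of pairs `(i,j)`, `i < j` -/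

/-- `M` is a perfect matching of `{1, …, 2n}`. -/
def IsPerfectMatching (n : ℕ) (M : Finset (ℕ × ℕ)) : Prop :=
  (∀ p ∈ M, p.1 < p.2 ∧ 1 ≤ p.1 ∧ p.2 ≤ 2 * n) ∧
  ∀ x, 1 ≤ x → x ≤ 2 * n → ∃! p, p ∈ M ∧ (p.1 = x ∨ p.2 = x)

/-- The matching `M` contains the pattern `τ ∈ S_k`: there are
`i_1 < i_2 < ⋯ < i_{2k}` with `(i_a, i_{2k+1-τ(a)}) ∈ M` for all `1 ≤ a ≤ k`
(written here 0-indexed). -/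
def MatchContains {k : ℕ} (τ : Equiv.Perm (Fin k)) (M : Finset (ℕ × ℕ)) : Prop :=
  ∃ f : Fin (2 * k) → ℕ, StrictMono f ∧
    ∀ a : Fin k,
      (f ⟨a.1, by have := a.isLt; omega⟩,
       f ⟨2 * k - 1 - (τ a).1, by have := (τ a).isLt; omega⟩) ∈ M

def MatchAvoids {k : ℕ} (τ : Equiv.Perm (Fin k)) (M : Finset (ℕ × ℕ)) : Prop :=
  ¬ MatchContains τ M

/-! ### Dyck paths as lists of booleans (`true` = east step, `false` = south step) -/

/-- A Dyck path of semilength `n`, from `(0,n)` to `(n,0)`, staying weakly above `y = n - x`. -/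
def IsDyckPath (n : ℕ) (t : List Bool) : Prop :=
  t.length = 2 * n ∧ t.count true = n ∧
  ∀ i, (t.take i).count false ≤ (t.take i).count true

/-- The height (distance above the diagonal) of the `i`-th vertex of the path `t`. -/
def pathHeight (t : List Bool) (i : ℕ) : ℤ :=
  ((t.take i).count true : ℤ) - ((t.take i).count false : ℤ)

/-- `s` lies weakly below `t` (for paths of the same semilength). -/
def WeaklyBelow (s t : List Bool) : Prop := ∀ i, pathHeight s i ≤ pathHeight t i

/-- The shape of a matching of `[2n]`: an east step for each opener, a south step for
each closer. -/
def shapeOf (n : ℕ) (M : Finset (ℕ × ℕ)) : List Bool :=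
  (List.range (2 * n)).map fun x => decide ((x + 1) ∈ M.image Prod.fst)

/-- Number of returns of a path: south steps ending on the diagonal. -/
def returnsOf (t : List Bool) : ℕ :=
  ((Finset.range t.length).filter fun i =>
    t[i]? = some false ∧ (t.take (i+1)).count true = (t.take (i+1)).count false).card

/-- Height sequence of a path, as natural numbers. -/
def hseq (t : List Bool) (i : ℕ) : ℕ := (t.take i).count true - (t.take i).count false

/-- `η(F)`: the number of indices `0 ≤ i ≤ 2n` with `h_i = 2`. -/
def etaOf (n : ℕ) (t : List Bool) : ℕ :=
  ((Finset.range (2 * n + 1)).filter fun i => hseq t i = 2).card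

/-! ### Full rook placements on Ferrers boards -/

/-- The square in column `c`, row `r` (both 1-indexed from the bottom left) belongs to the
Ferrers board with border path `t ∈ F_n`. -/
def InBoard (n : ℕ) (t : List Bool) (c r : ℕ) : Prop :=
  1 ≤ c ∧ 1 ≤ r ∧ ∃ i, c ≤ (t.take i).count true ∧ (t.take i).count false + r ≤ n

/-- `R` is a full rook placement on the Ferrers board with border path `t ∈ F_n`:
one rook in each of the `n` rows and `n` columns. -/
def IsFullRookPlacement (n : ℕ) (t : List Bool) (R : Finset (ℕ × ℕ)) : Prop :=
  (∀ p ∈ R, InBoard n t p.1 p.2) ∧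
  (∀ c, 1 ≤ c → c ≤ n → ∃! p, p ∈ R ∧ p.1 = c) ∧
  (∀ r, 1 ≤ r → r ≤ n → ∃! p, p ∈ R ∧ p.2 = r)

/-- The rooks of `R` lying in the rectangle `Γ(V_i)` determined by the `i`-th border vertex. -/
def rectRooks (n : ℕ) (t : List Bool) (R : Finset (ℕ × ℕ)) (i : ℕ) : Finset (ℕ × ℕ) :=
  R.filter fun p => p.1 ≤ (t.take i).count true ∧ p.2 + (t.take i).count false ≤ n

/-- Length of the longest increasing sequence (in both coordinates) in a finite point set. -/
def lisLen (S : Finset (ℕ × ℕ)) : ℕ :=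
  (S.powerset.filter fun T => ∀ p ∈ T, ∀ q ∈ T, p.1 < q.1 → p.2 < q.2).sup Finset.card

/-- The full rook placement `R` on the board with border `t ∈ F_n` contains the pattern `τ`:
some rectangle `Γ(V_i)` contains an occurrence of `τ`. -/
def PlacementContains {k : ℕ} (τ : Equiv.Perm (Fin k)) (n : ℕ) (t : List Bool)
    (R : Finset (ℕ × ℕ)) : Prop :=
  ∃ i ≤ 2 * n, ∃ f : Fin k → ℕ × ℕ,
    (∀ a, f a ∈ R ∧ (f a).1 ≤ (t.take i).count true ∧ (f a).2 + (t.take i).count false ≤ n) ∧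
    (∀ a b : Fin k, a < b → (f a).1 < (f b).1) ∧
    (∀ a b : Fin k, τ a < τ b → (f a).2 < (f b).2)

def PlacementAvoids {k : ℕ} (τ : Equiv.Perm (Fin k)) (n : ℕ) (t : List Bool)
    (R : Finset (ℕ × ℕ)) : Prop :=
  ¬ PlacementContains τ n t R

/-- `R` is board-minimal on the board with border `t`: every peak corner square holds a rook. -/
def BoardMinimal (n : ℕ) (t : List Bool) (R : Finset (ℕ × ℕ)) : Prop :=
  ∀ i, t[i]? = some true → t[i+1]? = some false →
    ((t.take (i+1)).count true, n - (t.take (i+1)).count false) ∈ R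

/-- Board-minimal full rook placements on boards of `F_n` avoiding the pattern `σ`,
recorded as pairs (border path, rook set). -/
def MinPlacements (n : ℕ) {k : ℕ} (σ : Equiv.Perm (Fin k)) :
    Set (List Bool × Finset (ℕ × ℕ)) :=
  {tR | IsDyckPath n tR.1 ∧ IsFullRookPlacement n tR.1 tR.2 ∧ BoardMinimal n tR.1 tR.2 ∧
        PlacementAvoids σ n tR.1 tR.2}

/-! ### Pattern avoidance in permutations -/

def PermContains {n k : ℕ} (τ : Equiv.Perm (Fin k)) (π : Equiv.Perm (Fin n)) : Prop :=
  ∃ f : Fin k → Fin n, StrictMono f ∧ ∀ a b : Fin k, τ a < τ b → π (f a) < π (f b)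

def PermAvoids {n k : ℕ} (τ : Equiv.Perm (Fin k)) (π : Equiv.Perm (Fin n)) : Prop :=
  ¬ PermContains τ π

/-- The full rook placement associated to a permutation of `[n]`. -/
def permPlacement {n : ℕ} (π : Equiv.Perm (Fin n)) : Finset (ℕ × ℕ) :=
  Finset.univ.image fun i : Fin n => ((i : ℕ) + 1, (π i : ℕ) + 1)

/-! ### Matchings with fixed points -/

/-- A (not necessarily perfect) matching on `{1, …, m}`: pairwise disjoint pairs. -/
def IsPartialMatching (m : ℕ) (M : Finset (ℕ × ℕ)) : Prop :=
  (∀ p ∈ M, p.1 < p.2 ∧ 1 ≤ p.1 ∧ p.2 ≤ m) ∧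
  ∀ p ∈ M, ∀ q ∈ M, p ≠ q → p.1 ≠ q.1 ∧ p.1 ≠ q.2 ∧ p.2 ≠ q.1 ∧ p.2 ≠ q.2

/-- The fixed points (unmatched vertices) of a matching on `{1, …, m}`. -/
def fixedPts (m : ℕ) (M : Finset (ℕ × ℕ)) : Finset ℕ :=
  (Finset.Icc 1 m).filter fun x => ∀ p ∈ M, p.1 ≠ x ∧ p.2 ≠ x

/-- The matched vertices of a matching on `{1, …, m}`. -/
def matchedSet (m : ℕ) (M : Finset (ℕ × ℕ)) : Finset ℕ :=
  (Finset.Icc 1 m).filter fun x => ∃ p ∈ M, p.1 = x ∨ p.2 = x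

/-- The rank (1-based) of `x` inside the finset `S`. -/
def rankIn (S : Finset ℕ) (x : ℕ) : ℕ := (S.filter (· ≤ x)).card

/-- The matching obtained by removing the fixed points and relabeling increasingly. -/
def relabeled (m : ℕ) (M : Finset (ℕ × ℕ)) : Finset (ℕ × ℕ) :=
  M.image fun p => (rankIn (matchedSet m M) p.1, rankIn (matchedSet m M) p.2)

/-! ### Set partitions -/

/-- `(i,j)` is an arc of the set partition `P` of `{1, …, n}`: `i < j` lie in a common block
with no element of that block strictly between them. -/
def PartArc {n : ℕ} (P : Finpartition (Finset.Icc 1 n)) (i j : ℕ) : Prop :=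
  i < j ∧ ∃ B ∈ P.parts, i ∈ B ∧ j ∈ B ∧ ∀ x ∈ B, ¬(i < x ∧ x < j)

/-- The set partition `P` contains the pattern `τ ∈ S_k`. -/
def PartContains {k n : ℕ} (τ : Equiv.Perm (Fin k)) (P : Finpartition (Finset.Icc 1 n)) : Prop :=
  ∃ f : Fin (2 * k) → ℕ, StrictMono f ∧
    ∀ a : Fin k,
      PartArc P (f ⟨a.1, by have := a.isLt; omega⟩)
        (f ⟨2 * k - 1 - (τ a).1, by have := (τ a).isLt; omega⟩)

def PartAvoids {k n : ℕ} (τ : Equiv.Perm (Fin k)) (P : Finpartition (Finset.Icc 1 n)) : Prop :=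
  ¬ PartContains τ P

/-! ### Counting functions -/

/-- `|M_n(τ)|`: the number of `τ`-avoiding perfect matchings of `[2n]`. -/
noncomputable def mcount {k : ℕ} (τ : Equiv.Perm (Fin k)) (n : ℕ) : ℕ :=
  {M : Finset (ℕ × ℕ) | IsPerfectMatching n M ∧ MatchAvoids τ M}.ncard

/-- `|M_n(σ,τ)|`: the number of perfect matchings of `[2n]` avoiding both `σ` and `τ`. -/
noncomputable def mcount2 {k : ℕ} (σ τ : Equiv.Perm (Fin k)) (n : ℕ) : ℕ :=
  {M : Finset (ℕ × ℕ) | IsPerfectMatching n M ∧ MatchAvoids σ M ∧ MatchAvoids τ M}.ncard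

/-- `|P_n(τ)|`: the number of `τ`-avoiding set partitions of `[n]`. -/
noncomputable def pcount {k : ℕ} (τ : Equiv.Perm (Fin k)) (n : ℕ) : ℕ :=
  Nat.card {P : Finpartition (Finset.Icc 1 n) // PartAvoids τ P}

/-- `|P_n(σ,τ)|`: the number of set partitions of `[n]` avoiding both `σ` and `τ`. -/
noncomputable def pcount2 {k : ℕ} (σ τ : Equiv.Perm (Fin k)) (n : ℕ) : ℕ :=
  Nat.card {P : Finpartition (Finset.Icc 1 n) // PartAvoids σ P ∧ PartAvoids τ P}

/-- `|S_n(τ)|`: the number of `τ`-avoiding permutations of `[n]`. -/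
noncomputable def scount {k : ℕ} (τ : Equiv.Perm (Fin k)) (n : ℕ) : ℕ :=
  Nat.card {π : Equiv.Perm (Fin n) // PermAvoids τ π}

/-- The generating function `A(z) = Σ_{n≥0} |M_n(312)| zⁿ` over `ℚ`. -/
noncomputable def A312 : PowerSeries ℚ := PowerSeries.mk fun n => (mcount p312 n : ℚ)

section algebra312
open PowerSeries

theorem aux_quadratic {R : Type*} [CommRing R] (y z s e d x w A G : R)
    (hs : s = 1 - 3 * y) (hz : z = y * s) (he : e * s = 1) (hd : d * (1 - 2 * y) = 1)
    (hA : A = s * d ^ 2) (hw : s * w = 1 + x * w + y * x * w ^ 2)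
    (hG : G = 1 + e * x * (1 + (x - y) * w)) :
    A * z * G ^ 2 + A * (x ^ 2 - x - z) * G + x = 0 := by
  have hg : s * G = s + x * (1 + (x - y) * w) := by
    rw [hG]; linear_combination (x * (1 + (x - y) * w)) * he
  have key : y * (s * G) ^ 2 + (x ^ 2 - x - y * s) * (s * G) + x * (1 - 2 * y) ^ 2 = 0 := by
    rw [hg]; subst hs
    linear_combination (-x * (x - y) ^ 2) * hw
  subst hA hz
  linear_combination d ^ 2 * key - x * (d * (1 - 2 * y) + 1) * hd

theorem exists_Y : ∃ Y : PowerSeries ℚ, Y = X + 3 * Y ^ 2 ∧ constantCoeff Y = 0 := by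
  let C0 : PowerSeries ℚ := rescale (3 : ℚ) (PowerSeries.map (Nat.castRingHom ℚ) catalanSeries)
  have h : C0 ^ 2 * (3 * X) + 1 = C0 := by
    have := congrArg (fun f => rescale (3 : ℚ) (PowerSeries.map (Nat.castRingHom ℚ) f))
      catalanSeries_sq_mul_X_add_one
    simp only [map_add, map_mul, map_pow, map_one, map_X, rescale_X] at this
    have h3 : (C (3 : ℚ)) = (3 : PowerSeries ℚ) := map_ofNat C 3
    rw [h3] at this
    exact this
  refine ⟨X * C0, ?_, by simp⟩
  linear_combination (-X) * h

/-- coefficients of the auxiliary series -/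
noncomputable def wco {R : Type*} [CommRing R] (e y : R) : ℕ → R
  | 0 => e
  | m + 1 => e * (wco e y m + y * ∑ i : Fin (m + 1), wco e y i * wco e y (m - i))
termination_by m => m
decreasing_by all_goals omega

theorem wco_eq {R : Type*} [CommRing R] (s e y : R) (he : e * s = 1) :
    C s * (PowerSeries.mk (wco e y)) =
      1 + X * PowerSeries.mk (wco e y) + C y * X * PowerSeries.mk (wco e y) ^ 2 := by
  ext m
  rw [mul_assoc (C y), map_add, map_add, coeff_C_mul, coeff_C_mul]
  cases m with
  | zero => simp [wco]; rw [mul_comm]; exact he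
  | succ m =>
    rw [coeff_succ_X_mul, coeff_succ_X_mul, sq, coeff_mul]
    simp only [coeff_mk, coeff_one, Nat.succ_ne_zero, if_false, zero_add]
    rw [Finset.Nat.sum_antidiagonal_eq_sum_range_succ (fun i j => wco e y i * wco e y j),
      ← Fin.sum_univ_eq_sum_range (fun i => wco e y i * wco e y (m - i))]
    conv_lhs => rw [wco]
    rw [← mul_assoc, mul_comm s, he, one_mul]

theorem exists_system : ∃ (A : PowerSeries ℚ) (T G : ℕ → PowerSeries ℚ),
    (2 * (1 + 4 * X) ^ 2 * A - (1 + 36 * X)) ^ 2 = (1 - 12 * X : PowerSeries ℚ) ^ 3 ∧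
    G 0 = 1 ∧ A * (1 - X * T 1) = 1 ∧
    (∀ k, G (k + 1) = ∑ j ∈ Finset.range (k + 1), T (j + 1) * G (k - j)) ∧
    (∀ m, T (m + 1) = A * ((if m = 0 then 1 else 0) + X * G (m + 2))) := by
  obtain ⟨Y, hY, hY0⟩ := exists_Y
  obtain ⟨e, he⟩ : ∃ e : PowerSeries ℚ, e * (1 - 3 * Y) = 1 :=
    ⟨(1 - 3 * Y)⁻¹, PowerSeries.inv_mul_cancel _ (by simp [hY0])⟩
  obtain ⟨d, hd⟩ : ∃ d : PowerSeries ℚ, d * (1 - 2 * Y) = 1 :=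
    ⟨(1 - 2 * Y)⁻¹, PowerSeries.inv_mul_cancel _ (by simp [hY0])⟩
  have hz : (X : PowerSeries ℚ) = Y * (1 - 3 * Y) := by linear_combination -hY
  set W : PowerSeries (PowerSeries ℚ) := PowerSeries.mk (wco e Y) with hW
  set G : PowerSeries (PowerSeries ℚ) := 1 + C e * X * (1 + (X - C Y) * W) with hG
  obtain ⟨A, hA⟩ : ∃ A, A = (1 - 3 * Y) * d ^ 2 := ⟨_, rfl⟩
  have hq := aux_quadratic (C Y) (C (X : PowerSeries ℚ)) (C (1 - 3 * Y)) (C e) (C d)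
    (X : PowerSeries (PowerSeries ℚ)) W (C A) G
    (by rw [map_sub, map_mul, map_one, map_ofNat]) (by rw [← map_mul, ← hz]) (by rw [← map_mul, he, map_one])
    (by have := congrArg C hd
        rwa [map_mul, map_sub, map_mul, map_one, map_ofNat] at this)
    (by rw [hA]; simp) (wco_eq _ _ _ he) hG
  have hG0 : constantCoeff G = 1 := by rw [hG]; simp
  obtain ⟨H, hH⟩ : ∃ H, G * H = 1 := ⟨invOfUnit G 1, mul_invOfUnit G 1 (by simpa using hG0)⟩
  have hT0 : constantCoeff (1 - H) = 0 := by
    have := congrArg constantCoeff hH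
    rw [map_mul, hG0, one_mul] at this
    rw [map_sub, this]; simp
  have h1 : (1 - H) * G = G - 1 := by linear_combination -hH
  have h2 : X * (1 - H) = C A * X ^ 2 + X * C (1 - A) + C (A * X) * (G - 1) := by
    simp only [map_sub, map_mul, map_one]
    linear_combination (-H) * hq +
      (C A * C X * G + C A * (X ^ 2 - X - C X)) * hH
  have e2 : ∀ m, coeff m (1 - H) = (if m = 1 then A else 0) + (if m = 0 then 1 - A else 0)
      + A * X * coeff (m + 1) G := by
    intro m
    have := congrArg (coeff (m + 1)) h2
    rw [coeff_succ_X_mul, map_add, map_add, coeff_succ_X_mul, coeff_C_mul, coeff_C_mul, coeff_X_pow,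
      map_sub (coeff (m + 1)) G 1, coeff_one, coeff_C] at this
    rw [this]
    simp
  have hG0' : coeff 0 G = 1 := by simpa using hG0
  have hT0' : coeff 0 (1 - H) = 0 := by simpa using hT0
  have e1 : ∀ k, coeff (k + 1) G =
      ∑ j ∈ Finset.range (k + 1), coeff (j + 1) (1 - H) * coeff (k - j) G := by
    intro k
    have := congrArg (coeff (k + 1)) h1
    rw [coeff_mul, Finset.Nat.sum_antidiagonal_eq_sum_range_succ
      (fun i j => coeff i (1 - H) * coeff j G), Finset.sum_range_succ', hT0', map_sub,
      coeff_one] at this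
    simp at this
    rw [← this]; simp
  refine ⟨A, fun m => coeff m (1 - H), fun m => coeff m G, ?_, hG0', ?_, e1, ?_⟩
  · have hz1 : (1 + 4 * X : PowerSeries ℚ) = (1 - 2 * Y) * (1 + 6 * Y) := by rw [hz]; ring
    have : (1 + 4 * X) ^ 2 * A = (1 - 3 * Y) * (1 + 6 * Y) ^ 2 := by
      rw [hz1, hA]
      linear_combination ((1 - 3 * Y) * (1 + 6 * Y) ^ 2 * (d * (1 - 2 * Y) + 1)) * hd
    rw [mul_assoc, this, hz]; ring
  · have a0 := e2 0
    have a1 := e1 0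
    rw [hT0'] at a0
    simp only [zero_add, Finset.range_one, Finset.sum_singleton, Nat.sub_zero, hG0', mul_one] at a1 a0
    simp only [a1] at a0
    simp only [if_true, zero_ne_one, if_false, zero_add] at a0
    linear_combination a0
  · intro m
    simp only [e2 (m + 1)]
    by_cases h : m = 0 <;> simp [h, mul_add, mul_assoc]

end algebra312

section count312
open PowerSeries

noncomputable def Pw (A : PowerSeries ℚ) (T : ℕ → PowerSeries ℚ) : ℕ → List Bool → PowerSeries ℚ
  | c, [] => if c = 0 then A else 0
  | c, false :: w => Pw A T (c + 1) w
  | c, true :: w => T (c + 1) * Pw A T 0 w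

def Juw : List Bool → Finset (List Bool)
  | [] => ∅
  | true :: _ => {[false], [true]}
  | false :: w => (Juw w).image (List.cons false) ∪ (Juw w).image (List.cons true)

def Iuw (w : List Bool) : Finset (List Bool) := insert [] (Juw w)

def preW (w u : List Bool) : List Bool := u ++ true :: w.drop u.length

theorem nil_notMem_Juw (w : List Bool) : [] ∉ Juw w := by
  rcases w with _ | ⟨_ | _, w⟩ <;> simp [Juw]

theorem sum_Juw_false {R : Type*} [AddCommMonoid R] (w : List Bool) (f : List Bool → R) :
    ∑ u ∈ Juw (false :: w), f (preW (false :: w) u) =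
      (∑ u ∈ Juw w, f (false :: preW w u)) + ∑ u ∈ Juw w, f (true :: preW w u) := by
  rw [Juw, Finset.sum_union, Finset.sum_image, Finset.sum_image]
  · simp [preW]
  · intro a _ b _ h; simpa using h
  · intro a _ b _ h; simpa using h
  · rw [Finset.disjoint_left]; intro a ha hb
    simp only [Finset.mem_image] at ha hb
    obtain ⟨b, _, rfl⟩ := ha
    obtain ⟨c, _, h⟩ := hb
    simp at h

def Ncount : ℕ → List Bool → ℕ
  | 0, w => if w = [] then 1 else 0
  | L + 1, w => (match w with | true :: w' => Ncount L w' | _ => 0) +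
      ∑ u ∈ Iuw w, Ncount L (preW w u)

theorem Ncount_succ (L : ℕ) (w : List Bool) :
    Ncount (L + 1) w = (match w with | true :: w' => Ncount L w' | _ => 0) +
      ∑ u ∈ Iuw w, Ncount L (preW w u) := by
  rcases w with _ | ⟨_ | _, w⟩ <;> simp [Ncount]

theorem Pw_rep (A : PowerSeries ℚ) (T : ℕ → PowerSeries ℚ) (k c : ℕ) (r : List Bool) :
    Pw A T c (List.replicate k false ++ true :: r) = T (c + k + 1) * Pw A T 0 r := by
  induction k generalizing c with
  | zero => simp [Pw]
  | succ k ih => rw [List.replicate_succ, List.cons_append, Pw, ih]; congr 2; omega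

theorem Pw_rep_nil (A : PowerSeries ℚ) (T : ℕ → PowerSeries ℚ) (k c : ℕ) :
    Pw A T c (List.replicate k false) = if c + k = 0 then A else 0 := by
  induction k generalizing c with
  | zero => simp [Pw]
  | succ k ih => rw [List.replicate_succ, Pw, ih]; simp

theorem Juw_rep (k : ℕ) : Juw (List.replicate k false) = ∅ := by
  induction k with
  | zero => rfl
  | succ k ih => rw [List.replicate_succ, Juw, ih]; simp

theorem list_bool_cases (w : List Bool) :
    (∃ k, w = List.replicate k false) ∨ ∃ k r, w = List.replicate k false ++ true :: r := by
  induction w with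
  | nil => left; exact ⟨0, rfl⟩
  | cons b w ih =>
    cases b with
    | true => right; exact ⟨0, w, rfl⟩
    | false =>
      rcases ih with ⟨k, rfl⟩ | ⟨k, r, rfl⟩
      · left; exact ⟨k + 1, rfl⟩
      · right; exact ⟨k + 1, r, rfl⟩

theorem Pw_sum (A : PowerSeries ℚ) (T G : ℕ → PowerSeries ℚ) (hG0 : G 0 = 1)
    (hG : ∀ k, G (k + 1) = ∑ j ∈ Finset.range (k + 1), T (j + 1) * G (k - j))
    (k c : ℕ) (r : List Bool) :
    ∑ u ∈ Juw (List.replicate k false ++ true :: r),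
      Pw A T c (preW (List.replicate k false ++ true :: r) u) =
    (∑ j ∈ Finset.range (k + 2), T (c + j + 1) * G (k + 1 - j)) * Pw A T 0 r := by
  induction k generalizing c with
  | zero =>
    have hG1 : G 1 = T 1 := by rw [hG 0]; simp [hG0]
    simp [Juw, preW, Pw, Finset.sum_range_succ, hG0, hG1]
    ring
  | succ k ih =>
    rw [List.replicate_succ, List.cons_append,
      sum_Juw_false (List.replicate k false ++ true :: r) (Pw A T c)]
    simp only [Pw]
    rw [ih, ← Finset.mul_sum, ih, Finset.sum_range_succ' _ (k + 1 + 1)]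
    have : G (k + 2) = ∑ j ∈ Finset.range (k + 2), T (0 + j + 1) * G (k + 1 - j) := by
      rw [hG (k + 1)]; simp
    rw [← this, add_mul]
    congr 1
    · congr 1
      apply Finset.sum_congr rfl
      intro j _
      congr 2
      · omega
      · omega
    · simp [mul_assoc]

theorem Pw_rec (A : PowerSeries ℚ) (T G : ℕ → PowerSeries ℚ) (hG0 : G 0 = 1)
    (hA : A * (1 - X * T 1) = 1)
    (hG : ∀ k, G (k + 1) = ∑ j ∈ Finset.range (k + 1), T (j + 1) * G (k - j))
    (hT : ∀ m, T (m + 1) = A * ((if m = 0 then 1 else 0) + X * G (m + 2))) (w : List Bool) :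
    Pw A T 0 w = (if w = [] then 1 else 0) +
      (match w with | true :: w' => Pw A T 0 w' | _ => 0) +
      X * ∑ u ∈ Iuw w, Pw A T 0 (preW w u) := by
  rw [Iuw, Finset.sum_insert (nil_notMem_Juw w)]
  have h0 : preW w [] = true :: w := by simp [preW]
  rw [h0, Pw]
  rcases list_bool_cases w with ⟨k, rfl⟩ | ⟨k, r, rfl⟩
  · rw [Juw_rep, Pw_rep_nil]
    cases k with
    | zero => simp; linear_combination hA
    | succ k => simp [List.replicate_succ]
  · rw [Pw_sum A T G hG0 hG, Pw_rep]
    have h1 : G (k + 2) = ∑ j ∈ Finset.range (k + 2), T (0 + j + 1) * G (k + 1 - j) := by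
      rw [hG (k + 1)]; simp
    rw [← h1]
    have h2 := hT k
    have h3 : (1 - X * T 1) * T (k + 1) = (if k = 0 then 1 else 0) + X * G (k + 2) := by
      rw [h2]; linear_combination ((if k = 0 then 1 else 0) + X * G (k + 2)) * hA
    cases k with
    | zero =>
      simp at h3 ⊢
      linear_combination (Pw A T 0 r) * h3
    | succ k =>
      simp [List.replicate_succ] at h3 ⊢
      linear_combination (Pw A T 0 r) * h3

theorem preW_length {w u : List Bool} (h : u ∈ Iuw w) : (preW w u).length = w.length + 1 := by
  have : u.length ≤ w.length := by
    rw [Iuw, Finset.mem_insert] at h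
    rcases h with rfl | h
    · simp
    · induction w generalizing u with
      | nil => simp [Juw] at h
      | cons b w ih =>
        cases b with
        | true => simp [Juw] at h; rcases h with rfl | rfl <;> simp
        | false =>
          simp [Juw] at h
          rcases h with ⟨a, ha, rfl⟩ | ⟨a, ha, rfl⟩ <;> simpa using ih ha
  simp [preW]; omega

theorem Ncount_lt (L : ℕ) (w : List Bool) (h : L < w.length) : Ncount L w = 0 := by
  induction L generalizing w with
  | zero =>
    have : w ≠ [] := by rintro rfl; simp at h
    simp [Ncount, this]
  | succ L ih =>
    rw [Ncount_succ, Finset.sum_eq_zero (fun u hu => ih _ (by rw [preW_length hu]; omega))]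
    rcases w with _ | ⟨_ | _, w⟩
    · rfl
    · rfl
    · simp only [add_zero]; exact ih _ (by simp at h; omega)

theorem Ncount_eq (A : PowerSeries ℚ) (T G : ℕ → PowerSeries ℚ) (hG0 : G 0 = 1)
    (hA : A * (1 - X * T 1) = 1)
    (hG : ∀ k, G (k + 1) = ∑ j ∈ Finset.range (k + 1), T (j + 1) * G (k - j))
    (hT : ∀ m, T (m + 1) = A * ((if m = 0 then 1 else 0) + X * G (m + 2)))
    (L n : ℕ) (w : List Bool) (h : L = 2 * n + w.length) :
    (Ncount L w : ℚ) = coeff n (Pw A T 0 w) := by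
  induction L generalizing n w with
  | zero =>
    have hn : n = 0 := by omega
    have hw : w = [] := List.length_eq_zero_iff.1 (by omega)
    subst hn hw
    rw [Pw_rec A T G hG0 hA hG hT]
    simp [Ncount]
  | succ L ih =>
    rw [Pw_rec A T G hG0 hA hG hT, Ncount_succ, Nat.cast_add, map_add, map_add]
    have h1 : coeff n (if w = [] then 1 else 0 : PowerSeries ℚ) = 0 := by
      split_ifs with hw
      · subst hw; simp at h; rw [coeff_one, if_neg (by omega)]
      · simp
    rw [h1, zero_add]
    congr 1
    · rcases w with _ | ⟨_ | _, w⟩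
      · simp
      · simp
      · exact ih n w (by simp at h; omega)
    · cases n with
      | zero =>
        rw [coeff_zero_X_mul, Finset.sum_eq_zero, Nat.cast_zero]
        intro u hu
        exact Ncount_lt _ _ (by rw [preW_length hu]; omega)
      | succ n =>
        rw [coeff_succ_X_mul, map_sum, Nat.cast_sum]
        apply Finset.sum_congr rfl
        intro u hu
        exact ih n _ (by rw [preW_length hu]; omega)

end count312

section comb312

def markS : List (ℕ × Bool) → List (ℕ × Bool)
  | [] => []
  | [x] => [(x.1, true)]
  | x :: y :: l => (x.1, false) :: markS (y :: l)

def markB : List Bool → List Bool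
  | [] => []
  | [_] => [true]
  | _ :: y :: l => false :: markB (y :: l)

theorem markS_fst (U : List (ℕ × Bool)) : (markS U).map Prod.fst = U.map Prod.fst := by
  induction U with
  | nil => rfl
  | cons x l ih =>
    cases l with
    | nil => rfl
    | cons y l => simp [markS] at ih ⊢; exact ih

theorem markS_snd (U : List (ℕ × Bool)) : (markS U).map Prod.snd = markB (U.map Prod.snd) := by
  induction U with
  | nil => rfl
  | cons x l ih =>
    cases l with
    | nil => rfl
    | cons y l => simp [markS, markB] at ih ⊢; exact ih

theorem markB_length (U : List Bool) : (markB U).length = U.length := by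
  induction U with
  | nil => rfl
  | cons x l ih =>
    cases l with
    | nil => rfl
    | cons y l => simp [markB] at ih ⊢; exact ih

theorem mem_Juw (w u : List Bool) : u ∈ Juw w ↔ u ≠ [] ∧ ∃ d, w = markB u ++ d := by
  induction w generalizing u with
  | nil =>
    simp only [Juw, Finset.notMem_empty, false_iff]
    rintro ⟨h, d, hd⟩
    have := congrArg List.length hd
    simp [markB_length] at this
    exact h (List.length_eq_zero_iff.1 (by omega))
  | cons b w ih =>
    rcases u with _ | ⟨x, _ | ⟨y, u⟩⟩
    · cases b <;> simp [Juw]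
    · cases b with
      | true => cases x <;> simp [Juw, markB]
      | false => cases x <;> simp [Juw, markB, nil_notMem_Juw]
    · cases b with
      | true => simp [Juw, markB]
      | false =>
        have := ih (y :: u)
        cases x <;> simpa [Juw, markB] using this

theorem mem_Iuw (w u : List Bool) : u ∈ Iuw w ↔ ∃ d, w = markB u ++ d := by
  rw [Iuw, Finset.mem_insert, mem_Juw]
  by_cases h : u = []
  · subst h; simp [markB]
  · simp [h]

theorem markS_flag (U : List (ℕ × Bool)) (hU : (U.map Prod.fst).Pairwise (· > ·)) (c : ℕ) (f : Bool)
    (h : (c, f) ∈ markS U) : (f = true ↔ ∀ b ∈ U.map Prod.fst, c ≤ b) := by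
  induction U with
  | nil => simp [markS] at h
  | cons x l ih =>
    cases l with
    | nil => simp [markS] at h; simp [h]
    | cons y l =>
      rw [List.map_cons, List.pairwise_cons] at hU
      rw [markS, List.mem_cons] at h
      rcases h with h | h
      · simp only [Prod.mk.injEq] at h
        obtain ⟨rfl, rfl⟩ := h
        have := hU.1 y.1 (by simp)
        simp only [Bool.false_eq_true, false_iff]
        intro h
        have := h y.1 (by simp)
        omega
      · rw [ih hU.2 h, List.map_cons (l := y :: l), List.forall_mem_cons]
        constructor
        · intro hh
          refine ⟨?_, hh⟩
          have h1 := hh y.1 (by simp)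
          have h2 := hU.1 y.1 (by simp)
          omega
        · exact fun hh => hh.2

inductive Reach : ℕ → Finset (ℕ × ℕ) → List (ℕ × Bool) → Prop
  | nil : Reach 0 ∅ []
  | opn {L M S} : Reach L M S → Reach (L + 1) M ((L + 1, true) :: S)
  | cls {L M U a D} : Reach L M (U ++ (a, true) :: D) →
      Reach (L + 1) (insert (a, L + 1) M) (markS U ++ D)

structure RInv (L : ℕ) (M : Finset (ℕ × ℕ)) (S : List (ℕ × Bool)) : Prop where
  sorted : (S.map Prod.fst).Pairwise (· > ·)
  rng : ∀ p ∈ M, 1 ≤ p.1 ∧ p.1 < p.2 ∧ p.2 ≤ L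
  dis : ∀ p ∈ M, ∀ q ∈ M, p.1 = q.1 ∨ p.1 = q.2 ∨ p.2 = q.2 → p = q
  opn : ∀ x, x ∈ S.map Prod.fst ↔ 1 ≤ x ∧ x ≤ L ∧ ∀ p ∈ M, p.1 ≠ x ∧ p.2 ≠ x
  flag : ∀ c f, (c, f) ∈ S → (f = true ↔ ∀ b ∈ S.map Prod.fst, b < c → ∀ p ∈ M,
    ¬ (p.1 < b ∧ c < p.2))
  av : ∀ p ∈ M, ∀ q ∈ M, ∀ r ∈ M,
    ¬ (p.1 < q.1 ∧ q.1 < r.1 ∧ r.1 < p.2 ∧ p.2 < r.2 ∧ r.2 < q.2)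
  ext : ∀ p ∈ M, ∀ q ∈ M, ∀ b ∈ S.map Prod.fst, ¬ (p.1 < b ∧ b < q.1 ∧ q.1 < p.2 ∧ p.2 < q.2)

theorem Reach.inv {L M S} (h : Reach L M S) : RInv L M S := by
  induction h with
  | nil => constructor <;> simp; intros; omega
  | @opn L M S h ih =>
    obtain ⟨h1, h2, h3, h4, h5, h6, h7⟩ := ih
    have hm : ∀ x, x ∈ ((L + 1, true) :: S).map Prod.fst ↔ x = L + 1 ∨ x ∈ S.map Prod.fst := by
      intro x; simp
    constructor
    · rw [List.map_cons, List.pairwise_cons]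
      refine ⟨fun x hx => ?_, h1⟩
      have := (h4 x).1 hx
      simp only; omega
    · intro p hp; have := h2 p hp; omega
    · exact h3
    · intro x
      rw [hm, h4]
      constructor
      · rintro (rfl | ⟨a, b, c⟩)
        · refine ⟨by omega, le_rfl, fun p hp => ?_⟩
          have := h2 p hp; omega
        · exact ⟨a, by omega, c⟩
      · rintro ⟨a, b, c⟩
        by_cases hx : x = L + 1
        · exact Or.inl hx
        · exact Or.inr ⟨a, by omega, c⟩
    · intro c f hc
      rw [List.mem_cons] at hc
      rcases hc with hc | hc
      · simp only [Prod.mk.injEq] at hc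
        obtain ⟨rfl, rfl⟩ := hc
        simp only [true_iff]
        intro b _ _ p hp
        have := h2 p hp; omega
      · rw [h5 c f hc]
        have hcL := (h4 c).1 (List.mem_map_of_mem (f := Prod.fst) hc)
        constructor
        · intro hh b hb hbc
          rw [hm] at hb
          rcases hb with rfl | hb
          · omega
          · exact hh b hb hbc
        · intro hh b hb hbc
          exact hh b ((hm b).2 (Or.inr hb)) hbc
    · exact h6
    · intro p hp q hq b hb
      rw [hm] at hb
      rcases hb with rfl | hb
      · have := h2 p hp; omega
      · exact h7 p hp q hq b hb
  | @cls L M U a D h ih =>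
    obtain ⟨h1, h2, h3, h4, h5, h6, h7⟩ := ih
    have hm : ∀ x, x ∈ (U ++ (a, true) :: D).map Prod.fst ↔
        x ∈ U.map Prod.fst ∨ x = a ∨ x ∈ D.map Prod.fst := by
      intro x; rw [List.map_append, List.mem_append, List.map_cons, List.mem_cons]
    have hm' : ∀ x, x ∈ (markS U ++ D).map Prod.fst ↔
        x ∈ U.map Prod.fst ∨ x ∈ D.map Prod.fst := by
      intro x; rw [List.map_append, List.mem_append, markS_fst]
    rw [List.map_append, List.pairwise_append, List.map_cons, List.pairwise_cons] at h1
    obtain ⟨sU, ⟨sa, sD⟩, sUD⟩ := h1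
    have hUa : ∀ x ∈ U.map Prod.fst, a < x := fun x hx => sUD x hx a (by simp)
    have hDa : ∀ x ∈ D.map Prod.fst, x < a := fun x hx => sa x hx
    have haf := (h5 a true (by simp)).1 rfl
    have ha := (h4 a).1 ((hm a).2 (Or.inr (Or.inl rfl)))
    constructor
    · rw [List.map_append, List.pairwise_append, markS_fst]
      exact ⟨sU, sD, fun x hx y hy => sUD x hx y (by simp only [List.mem_cons]; exact Or.inr hy)⟩
    · intro p hp
      rw [Finset.mem_insert] at hp
      rcases hp with rfl | hp
      · simp only; omega
      · have := h2 p hp; omega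
    · intro p hp q hq hpq
      rw [Finset.mem_insert] at hp hq
      rcases hp with rfl | hp <;> rcases hq with rfl | hq
      · rfl
      · have := h2 q hq; have := ha.2.2 q hq; simp only at hpq; omega
      · have := h2 p hp; have := ha.2.2 p hp; simp only at hpq; omega
      · exact h3 p hp q hq hpq
    · intro x
      rw [hm']
      have hx := h4 x
      rw [hm] at hx
      constructor
      · intro hh
        have h8 := hx.1 (by tauto)
        refine ⟨h8.1, by omega, fun p hp => ?_⟩
        rw [Finset.mem_insert] at hp
        rcases hp with rfl | hp
        · have : x ≠ a := by
            rcases hh with hh | hh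
            · have := hUa x hh; omega
            · have := hDa x hh; omega
          simp only; omega
        · exact h8.2.2 p hp
      · rintro ⟨a1, a2, a3⟩
        have h9 := a3 (a, L + 1) (by simp)
        simp only at h9
        have := hx.2 ⟨a1, by omega, fun p hp => a3 p (Finset.mem_insert_of_mem hp)⟩
        rcases this with h | h | h
        · exact Or.inl h
        · exact absurd h.symm h9.1
        · exact Or.inr h
    · intro c f hc
      rw [List.mem_append] at hc
      rcases hc with hc | hc
      · have hcU : c ∈ U.map Prod.fst := by
          rw [← markS_fst]; exact List.mem_map_of_mem (f := Prod.fst) hc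
        have hca := hUa c hcU
        have hcL := ((h4 c).1 ((hm c).2 (Or.inl hcU))).2.1
        rw [markS_flag U sU c f hc]
        constructor
        · intro hh b hb hbc p hp
          rw [hm'] at hb
          rcases hb with hb | hb
          · have := hh b hb; omega
          · have hba := hDa b hb
            rw [Finset.mem_insert] at hp
            rcases hp with rfl | hp
            · simp only; omega
            · have := haf b ((hm b).2 (Or.inr (Or.inr hb))) hba p hp
              omega
        · intro hh b hb
          by_contra hlt
          have := hh b ((hm' b).2 (Or.inl hb)) (by omega) (a, L + 1) (by simp)
          have := hUa b hb
          simp only at *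
          omega
      · have hcD : c ∈ D.map Prod.fst := List.mem_map_of_mem (f := Prod.fst) hc
        have hca := hDa c hcD
        rw [h5 c f (by simp [hc])]
        constructor
        · intro hh b hb hbc p hp
          rw [hm'] at hb
          rw [Finset.mem_insert] at hp
          rcases hp with rfl | hp
          · simp only; omega
          · exact hh b ((hm b).2 (by tauto)) hbc p hp
        · intro hh b hb hbc p hp
          rw [hm] at hb
          refine hh b ((hm' b).2 ?_) hbc p (Finset.mem_insert_of_mem hp)
          rcases hb with h | h | h
          · exact Or.inl h
          · omega
          · exact Or.inr h
    · intro p hp q hq r hr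
      rw [Finset.mem_insert] at hp hq hr
      rcases hp with rfl | hp
      · rcases hr with rfl | hr
        · simp only; omega
        · have := h2 r hr; simp only; omega
      rcases hr with rfl | hr
      · rcases hq with rfl | hq
        · simp only; omega
        · have := h2 q hq; simp only; omega
      rcases hq with rfl | hq
      · have := h7 p hp r hr a ((hm a).2 (Or.inr (Or.inl rfl)))
        simp only; omega
      · exact h6 p hp q hq r hr
    · intro p hp q hq b hb
      rw [hm'] at hb
      have hb' : b ∈ (U ++ (a, true) :: D).map Prod.fst := (hm b).2 (by tauto)
      rw [Finset.mem_insert] at hp hq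
      rcases hp with rfl | hp
      · rcases hq with rfl | hq
        · simp only; omega
        · have := h2 q hq; simp only; omega
      rcases hq with rfl | hq
      · intro hh
        simp only at hh
        exact haf b hb' hh.2.1 p hp ⟨hh.1, hh.2.2.1⟩
      · exact h7 p hp q hq b hb'

end comb312

section main312

theorem insert_inj312 {L : ℕ} {M1 M2 : Finset (ℕ × ℕ)} {a1 a2 : ℕ}
    (h1 : ∀ p ∈ M1, p.2 ≤ L) (h2 : ∀ p ∈ M2, p.2 ≤ L)
    (h : insert (a1, L + 1) M1 = insert (a2, L + 1) M2) : M1 = M2 ∧ a1 = a2 := by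
  have key : ∀ (M M' : Finset (ℕ × ℕ)) (a a' : ℕ), (∀ p ∈ M, p.2 ≤ L) →
      insert (a, L + 1) M = insert (a', L + 1) M' → M ⊆ M' := by
    intro M M' a a' hM hh p hp
    have : p ∈ insert (a', L + 1) M' := hh ▸ Finset.mem_insert_of_mem hp
    rw [Finset.mem_insert] at this
    rcases this with rfl | h
    · have := hM _ hp; simp at this
    · exact h
  refine ⟨Finset.Subset.antisymm (key _ _ _ _ h1 h) (key _ _ _ _ h2 h.symm), ?_⟩
  have : (a1, L + 1) ∈ insert (a2, L + 1) M2 := h ▸ Finset.mem_insert_self _ _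
  rw [Finset.mem_insert] at this
  rcases this with h | h
  · simpa using h
  · have := h2 _ h; simp at this

theorem split_inj312 {U1 D1 U2 D2 : List (ℕ × Bool)} {a : ℕ}
    (hs : ((U1 ++ (a, true) :: D1).map Prod.fst).Pairwise (· > ·))
    (h : U1 ++ (a, true) :: D1 = U2 ++ (a, true) :: D2) : U1 = U2 ∧ D1 = D2 := by
  rw [List.map_append, List.pairwise_append, List.map_cons, List.pairwise_cons] at hs
  obtain ⟨_, ⟨sa, _⟩, sUD⟩ := hs
  have n1 : (a, true) ∉ U1 := by
    intro hh
    have := sUD a (List.mem_map_of_mem (f := Prod.fst) hh) a (by simp)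
    omega
  have n2 : (a, true) ∉ D1 := by
    intro hh
    have := sa a (List.mem_map_of_mem (f := Prod.fst) hh)
    simp at this
  have := (List.append_cons_inj_of_notMem n1 n2).1 h
  exact ⟨this.1, this.2.2⟩

theorem Reach.func {L M S S'} (h : Reach L M S) (h' : Reach L M S') : S = S' := by
  induction L generalizing M S S' with
  | zero => cases h; cases h'; rfl
  | succ L ih =>
    have aux : ∀ {M : Finset (ℕ × ℕ)} {S : List (ℕ × Bool)} {a : ℕ}, Reach L (insert (a, L + 1) M) S →
        False := by
      intro M S a hh
      have := (hh.inv.rng (a, L + 1) (by simp)).2.2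
      simp at this
    generalize hM : M = M0 at h'
    cases h with
    | opn h =>
      cases h' with
      | opn h' => subst hM; rw [ih h h']
      | cls h' => subst hM; exact (aux h).elim
    | @cls _ M1 U1 a1 D1 h =>
      cases h' with
      | opn h' => subst hM; exact (aux h').elim
      | @cls _ M2 U2 a2 D2 h' =>
        obtain ⟨rfl, rfl⟩ := insert_inj312 (fun p hp => (h.inv.rng p hp).2.2)
          (fun p hp => (h'.inv.rng p hp).2.2) hM
        obtain ⟨rfl, rfl⟩ := split_inj312 h.inv.sorted (ih h h')
        rfl

theorem Reach.complete (L : ℕ) (M : Finset (ℕ × ℕ))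
    (rng : ∀ p ∈ M, 1 ≤ p.1 ∧ p.1 < p.2 ∧ p.2 ≤ L)
    (dis : ∀ p ∈ M, ∀ q ∈ M, p.1 = q.1 ∨ p.1 = q.2 ∨ p.2 = q.2 → p = q)
    (av : ∀ p ∈ M, ∀ q ∈ M, ∀ r ∈ M,
      ¬ (p.1 < q.1 ∧ q.1 < r.1 ∧ r.1 < p.2 ∧ p.2 < r.2 ∧ r.2 < q.2))
    (ext : ∀ p ∈ M, ∀ q ∈ M, ∀ b, 1 ≤ b → b ≤ L → (∀ p ∈ M, p.1 ≠ b ∧ p.2 ≠ b) →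
      ¬ (p.1 < b ∧ b < q.1 ∧ q.1 < p.2 ∧ p.2 < q.2)) : ∃ S, Reach L M S := by
  induction L generalizing M with
  | zero =>
    have : M = ∅ := by
      rw [Finset.eq_empty_iff_forall_notMem]
      intro p hp
      have := rng p hp; omega
    subst this
    exact ⟨[], Reach.nil⟩
  | succ L ih =>
    by_cases hc : ∃ a, (a, L + 1) ∈ M
    · obtain ⟨a, ha⟩ := hc
      obtain ⟨M', hM', rfl⟩ : ∃ M', (a, L + 1) ∉ M' ∧ M = insert (a, L + 1) M' :=
        ⟨M.erase (a, L + 1), by simp, by rw [Finset.insert_erase ha]⟩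
      have sub : ∀ p ∈ M', p ∈ insert (a, L + 1) M' := fun p hp => Finset.mem_insert_of_mem hp
      have ha' := rng _ ha
      simp only at ha'
      have hdis : ∀ p ∈ M', p.1 ≠ a ∧ p.2 ≠ a ∧ p.2 ≠ L + 1 := by
        intro p hp
        have hne : p ≠ (a, L + 1) := by rintro rfl; exact hM' hp
        refine ⟨fun h => hne (dis p (sub p hp) _ ha (Or.inl h)),
          fun h => hne (dis _ ha p (sub p hp) (Or.inr (Or.inl h.symm))).symm,
          fun h => hne (dis p (sub p hp) _ ha (Or.inr (Or.inr h)))⟩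
      have rng' : ∀ p ∈ M', 1 ≤ p.1 ∧ p.1 < p.2 ∧ p.2 ≤ L := by
        intro p hp
        have := rng p (sub p hp)
        have := hdis p hp
        omega
      obtain ⟨S, hS⟩ := ih M' rng'
        (fun p hp q hq => dis p (sub p hp) q (sub q hq))
        (fun p hp q hq r hr => av p (sub p hp) q (sub q hq) r (sub r hr))
        (by
          intro p hp q hq b b1 b2 b3 hh
          by_cases hb : b = a
          · subst hb
            have := rng' q hq
            exact av p (sub p hp) _ ha q (sub q hq) (by simp only; omega)
          · refine ext p (sub p hp) q (sub q hq) b b1 (by omega) (fun r hr => ?_) hh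
            rw [Finset.mem_insert] at hr
            rcases hr with rfl | hr
            · simp only; omega
            · exact b3 r hr)
      have hi := hS.inv
      have haS : a ∈ S.map Prod.fst :=
        (hi.opn a).2 ⟨ha'.1, by omega, fun p hp => ⟨(hdis p hp).1, (hdis p hp).2.1⟩⟩
      obtain ⟨⟨a', f⟩, hmem, rfl⟩ := List.mem_map.1 haS
      simp only at *
      have hf : f = true := by
        rw [hi.flag a' f hmem]
        intro b hb hba p hp hh
        have hb' := (hi.opn b).1 hb
        have := rng' p hp
        refine ext p (sub p hp) _ ha b hb'.1 (by omega) (fun r hr => ?_) (by simp only; omega)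
        rw [Finset.mem_insert] at hr
        rcases hr with rfl | hr
        · simp only; omega
        · exact hb'.2.2 r hr
      subst hf
      obtain ⟨U, D, rfl⟩ := List.append_of_mem hmem
      exact ⟨_, Reach.cls hS⟩
    · have rng' : ∀ p ∈ M, 1 ≤ p.1 ∧ p.1 < p.2 ∧ p.2 ≤ L := by
        intro p hp
        have := rng p hp
        have : p.2 ≠ L + 1 := by
          intro h; exact hc ⟨p.1, by rw [← h]; exact hp⟩
        omega
      obtain ⟨S, hS⟩ := ih M rng' dis av
        (fun p hp q hq b b1 b2 b3 => ext p hp q hq b b1 (by omega) b3)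
      exact ⟨_, Reach.opn hS⟩

abbrev Conf := Finset (ℕ × ℕ) × List (ℕ × Bool)

def opC (L : ℕ) (x : Conf) : Conf := (x.1, (L + 1, true) :: x.2)

def clC (L j : ℕ) (x : Conf) : Conf :=
  (insert ((x.2.getD j (0, true)).1, L + 1) x.1, markS (x.2.take j) ++ x.2.drop (j + 1))

def opF (L : ℕ) (F : List Bool → Finset Conf) : List Bool → Finset Conf
  | true :: w => (F w).image (opC L)
  | _ => ∅

def FR : ℕ → List Bool → Finset Conf
  | 0, w => if w = [] then {(∅, [])} else ∅
  | L + 1, w => opF L (FR L) w ∪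
      (Iuw w).biUnion fun u => (FR L (preW w u)).image (clC L u.length)

theorem clC_split (L : ℕ) (M : Finset (ℕ × ℕ)) (U D : List (ℕ × Bool)) (a : ℕ) (j : ℕ)
    (hj : j = U.length) : clC L j (M, U ++ (a, true) :: D) = (insert (a, L + 1) M, markS U ++ D) := by
  subst hj
  simp [clC]

theorem split_of_snd {S : List (ℕ × Bool)} {u d : List Bool}
    (h : S.map Prod.snd = u ++ true :: d) :
    ∃ U a D, S = U ++ (a, true) :: D ∧ U.map Prod.snd = u ∧ D.map Prod.snd = d := by
  rw [List.map_eq_append_iff] at h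
  obtain ⟨U, S', rfl, rfl, h⟩ := h
  rw [List.map_eq_cons_iff] at h
  obtain ⟨⟨a, f⟩, D, rfl, hf, rfl⟩ := h
  simp only at hf
  subst hf
  exact ⟨U, a, D, rfl, rfl, rfl⟩

theorem mem_FR (L : ℕ) (w : List Bool) (x : Conf) :
    x ∈ FR L w ↔ Reach L x.1 x.2 ∧ x.2.map Prod.snd = w := by
  induction L generalizing w x with
  | zero =>
    constructor
    · intro h
      rw [FR] at h
      split_ifs at h with hw
      · simp at h; subst h hw; exact ⟨Reach.nil, rfl⟩
      · simp at h
    · rintro ⟨h, h'⟩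
      obtain ⟨M, S⟩ := x
      simp only at h h'
      cases h
      simp at h'
      simp [FR, ← h']
  | succ L ih =>
    rw [FR, Finset.mem_union, Finset.mem_biUnion]
    constructor
    · rintro (h | ⟨u, hu, h⟩)
      · rcases w with _ | ⟨_ | _, w⟩
        · simp [opF] at h
        · simp [opF] at h
        · rw [opF, Finset.mem_image] at h
          obtain ⟨y, hy, rfl⟩ := h
          rw [ih] at hy
          exact ⟨Reach.opn hy.1, by simp [opC, hy.2]⟩
      · rw [Finset.mem_image] at h
        obtain ⟨⟨M, S⟩, hy, rfl⟩ := h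
        rw [ih] at hy
        simp only at hy
        obtain ⟨h1, h2⟩ := hy
        rw [mem_Iuw] at hu
        obtain ⟨d, rfl⟩ := hu
        rw [preW, ← markB_length u, List.drop_left] at h2
        obtain ⟨U, a, D, rfl, rfl, rfl⟩ := split_of_snd h2
        rw [clC_split _ _ _ _ _ _ (by simp)]
        exact ⟨Reach.cls h1, by simp [markS_snd]⟩
    · obtain ⟨M, S⟩ := x
      simp only
      rintro ⟨h, rfl⟩
      cases h with
      | @opn _ _ S h =>
        left
        rw [List.map_cons, opF, Finset.mem_image]
        exact ⟨(M, S), (ih _ _).2 ⟨h, rfl⟩, rfl⟩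
      | @cls _ M U a D h =>
        right
        refine ⟨U.map Prod.snd, ?_, ?_⟩
        · rw [mem_Iuw]
          exact ⟨D.map Prod.snd, by simp [markS_snd]⟩
        · rw [Finset.mem_image]
          refine ⟨(M, U ++ (a, true) :: D), (ih _ _).2 ⟨h, ?_⟩, clC_split _ _ _ _ _ _ (by simp)⟩
          simp only [preW, List.map_append, List.map_cons, markS_snd]
          rw [← markB_length (U.map Prod.snd), List.drop_left]

theorem clC_inj (L : ℕ) (w : List Bool) {u1 u2 : List Bool} (h1 : u1 ∈ Iuw w) (h2 : u2 ∈ Iuw w)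
    {x1 x2 : Conf} (hx1 : x1 ∈ FR L (preW w u1)) (hx2 : x2 ∈ FR L (preW w u2))
    (h : clC L u1.length x1 = clC L u2.length x2) : u1 = u2 ∧ x1 = x2 := by
  rw [mem_FR] at hx1 hx2
  obtain ⟨M1, S1⟩ := x1
  obtain ⟨M2, S2⟩ := x2
  simp only at hx1 hx2
  obtain ⟨r1, e1⟩ := hx1
  obtain ⟨r2, e2⟩ := hx2
  obtain ⟨U1, a1, D1, rfl, rfl, -⟩ := split_of_snd e1
  obtain ⟨U2, a2, D2, rfl, rfl, -⟩ := split_of_snd e2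
  rw [clC_split _ _ _ _ _ _ (by simp), clC_split _ _ _ _ _ _ (by simp), Prod.mk.injEq] at h
  obtain ⟨rfl, rfl⟩ := insert_inj312 (fun p hp => (r1.inv.rng p hp).2.2)
    (fun p hp => (r2.inv.rng p hp).2.2) h.1
  obtain ⟨rfl, rfl⟩ := split_inj312 r1.inv.sorted (r1.func r2)
  exact ⟨rfl, rfl⟩

theorem card_FR (L : ℕ) (w : List Bool) : (FR L w).card = Ncount L w := by
  induction L generalizing w with
  | zero => by_cases h : w = [] <;> simp [FR, Ncount, h]
  | succ L ih =>
    rw [FR, Ncount_succ, Finset.card_union_of_disjoint, Finset.card_biUnion]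
    · congr 1
      · rcases w with _ | ⟨_ | _, w⟩
        · rfl
        · rfl
        · rw [opF, Finset.card_image_of_injective, ih]
          rintro ⟨M1, S1⟩ ⟨M2, S2⟩ h
          simpa [opC] using h
      · apply Finset.sum_congr rfl
        intro u hu
        rw [Finset.card_image_of_injOn, ih]
        intro x hx y hy h
        exact (clC_inj L w hu hu hx hy h).2
    · intro u1 h1 u2 h2 hne
      rw [Function.onFun, Finset.disjoint_left]
      intro x hx hy
      rw [Finset.mem_image] at hx hy
      obtain ⟨x1, hx1, rfl⟩ := hx
      obtain ⟨x2, hx2, h⟩ := hy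
      exact hne (clC_inj L w h1 h2 hx1 hx2 h.symm).1
    · rw [Finset.disjoint_left]
      intro x hx hy
      rw [Finset.mem_biUnion] at hy
      obtain ⟨u, hu, hy⟩ := hy
      rw [Finset.mem_image] at hy
      obtain ⟨y, hy, rfl⟩ := hy
      rcases w with _ | ⟨_ | _, w⟩
      · simp [opF] at hx
      · simp [opF] at hx
      · rw [opF, Finset.mem_image] at hx
        obtain ⟨z, hz, hzy⟩ := hx
        rw [mem_FR] at hz
        have h1 : (((y.2.getD u.length (0, true)).1, L + 1) : ℕ × ℕ) ∈ z.1 := by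
          have := congrArg Prod.fst hzy
          simp only [opC, clC] at this
          rw [this]; simp
        have := (hz.1.inv.rng _ h1).2.2
        simp at this

theorem matchContains_312 (M : Finset (ℕ × ℕ)) : MatchContains p312 M ↔
    ∃ p ∈ M, ∃ q ∈ M, ∃ r ∈ M,
      p.1 < q.1 ∧ q.1 < r.1 ∧ r.1 < p.2 ∧ p.2 < r.2 ∧ r.2 < q.2 := by
  constructor
  · rintro ⟨f, hf, h⟩
    refine ⟨_, h 0, _, h 1, _, h 2, ?_⟩
    refine ⟨hf ?_, hf ?_, hf ?_, hf ?_, hf ?_⟩ <;> simp [p312, Fin.lt_def]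
  · rintro ⟨⟨p1, p2⟩, hp, ⟨q1, q2⟩, hq, ⟨r1, r2⟩, hr, h1, h2, h3, h4, h5⟩
    refine ⟨![p1, q1, r1, p2, r2, q2], ?_, ?_⟩
    · rw [Fin.strictMono_iff_lt_succ]
      intro i
      fin_cases i
      · exact h1
      · exact h2
      · exact h3
      · exact h4
      · exact h5
    · intro a
      fin_cases a
      · exact hp
      · exact hq
      · exact hr

theorem mcount_eq (n : ℕ) : mcount p312 n = Ncount (2 * n) [] := by
  rw [← card_FR, mcount]
  have : {M : Finset (ℕ × ℕ) | IsPerfectMatching n M ∧ MatchAvoids p312 M} =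
      ((FR (2 * n) []).image Prod.fst : Finset (Finset (ℕ × ℕ))) := by
    ext M
    rw [Set.mem_setOf_eq, Finset.mem_coe, Finset.mem_image, MatchAvoids, matchContains_312]
    constructor
    · rintro ⟨⟨h1, h2⟩, h3⟩
      have dis : ∀ p ∈ M, ∀ q ∈ M, p.1 = q.1 ∨ p.1 = q.2 ∨ p.2 = q.2 → p = q := by
        intro p hp q hq h
        have a1 := h1 p hp
        have a2 := h1 q hq
        rcases h with h | h | h
        · exact (h2 p.1 (by omega) (by omega)).unique ⟨hp, Or.inl rfl⟩ ⟨hq, Or.inl h.symm⟩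
        · exact (h2 p.1 (by omega) (by omega)).unique ⟨hp, Or.inl rfl⟩ ⟨hq, Or.inr h.symm⟩
        · exact (h2 p.2 (by omega) (by omega)).unique ⟨hp, Or.inr rfl⟩ ⟨hq, Or.inr h.symm⟩
      obtain ⟨S, hS⟩ := Reach.complete (2 * n) M
        (fun p hp => ⟨(h1 p hp).2.1, (h1 p hp).1, (h1 p hp).2.2⟩) dis
        (fun p hp q hq r hr h => h3 ⟨p, hp, q, hq, r, hr, h⟩)
        (by
          intro p hp q hq b b1 b2 b3
          obtain ⟨r, ⟨hr, hr'⟩, -⟩ := h2 b b1 b2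
          have := b3 r hr
          omega)
      refine ⟨(M, S), (mem_FR _ _ _).2 ⟨hS, ?_⟩, rfl⟩
      have hnil : S.map Prod.fst = [] := by
        rw [List.eq_nil_iff_forall_not_mem]
        intro x hx
        obtain ⟨b1, b2, b3⟩ := (hS.inv.opn x).1 hx
        obtain ⟨r, ⟨hr, hr'⟩, -⟩ := h2 x b1 b2
        have := b3 r hr
        omega
      rw [List.map_eq_nil_iff] at hnil ⊢
      exact hnil
    · rintro ⟨⟨M', S⟩, hx, rfl⟩
      rw [mem_FR] at hx
      simp only [List.map_eq_nil_iff] at hx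
      obtain ⟨h, rfl⟩ := hx
      have hi := h.inv
      refine ⟨⟨fun p hp => ⟨(hi.rng p hp).2.1, (hi.rng p hp).1, (hi.rng p hp).2.2⟩, ?_⟩, ?_⟩
      · intro x x1 x2
        have hx := hi.opn x
        simp only [List.map_nil, List.not_mem_nil, false_iff, not_and] at hx
        have hx' := hx x1 x2
        push Not at hx'
        obtain ⟨p, hp, hpx⟩ := hx'
        have hpx' : p.1 = x ∨ p.2 = x := by tauto
        refine ⟨p, ⟨hp, hpx'⟩, ?_⟩
        rintro q ⟨hq, hqx⟩
        rcases hpx' with rfl | rfl <;> rcases hqx with e | e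
        · exact hi.dis q hq p hp (Or.inl e)
        · exact (hi.dis p hp q hq (Or.inr (Or.inl e.symm))).symm
        · exact hi.dis q hq p hp (Or.inr (Or.inl e))
        · exact hi.dis q hq p hp (Or.inr (Or.inr e))
      · rintro ⟨p, hp, q, hq, r, hr, hh⟩
        exact hi.av p hp q hq r hr hh
  rw [this, Set.ncard_coe_finset, Finset.card_image_of_injOn]
  rintro ⟨M1, S1⟩ h1 ⟨M2, S2⟩ h2 h
  rw [Finset.mem_coe, mem_FR] at h1 h2
  simp only [List.map_eq_nil_iff] at h1 h2 h
  rw [h1.2, h2.2, h]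

end main312

/-- `(2(1+4z)² A(z) − (1+36z))² = (1−12z)³`, i.e.
`A(z) = 54z / (1 + 36z − (1−12z)^{3/2})`. -/
theorem gf_matchings_312 :
    (2 * (1 + 4 * PowerSeries.X) ^ 2 * A312 - (1 + 36 * PowerSeries.X)) ^ 2 =
      (1 - 12 * PowerSeries.X : PowerSeries ℚ) ^ 3 := by
  obtain ⟨A, T, G, h, hG0, hA, hG, hT⟩ := exists_system
  have : A312 = A := by
    ext n
    rw [A312, PowerSeries.coeff_mk, mcount_eq,
      Ncount_eq A T G hG0 hA hG hT (2 * n) n [] (by simp)]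
    simp [Pw]
  rw [this]
  exact h
end

section
/- Let B(z) = Σ_{n≥0} |P_n(312)| zⁿ be the generating function (as a formal power series over ℚ) for 312-avoiding set partitions. Then B(z) is a root of the cubic polynomial (z−1)(5z²−2z+1)² B³ + (−9z⁵+54z⁴−85z³+59z²−14z+3) B² + (−9z⁴+60z³−64z²+13z−3) B + (−9z³+23z²−4z+1); that is, substituting B(z) for B in this polynomial yields the zero power series. -/
/-- The generating function `B(z) = Σ_{n≥0} |P_n(312)| zⁿ` over `ℚ`. -/
noncomputable def B312 : PowerSeries ℚ := PowerSeries.mk fun n => (pcount p312 n : ℚ)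


theorem cubic_hom {K : Type*} [CommRing K] (d e z B : K) :
    ((z - 1) * (5 * z ^ 2 - 2 * z + 1) ^ 2 * B ^ 3 +
      (-9 * z ^ 5 + 54 * z ^ 4 - 85 * z ^ 3 + 59 * z ^ 2 - 14 * z + 3) * B ^ 2 +
      (-9 * z ^ 4 + 60 * z ^ 3 - 64 * z ^ 2 + 13 * z - 3) * B +
      (-9 * z ^ 3 + 23 * z ^ 2 - 4 * z + 1)) * (d ^ 5 * e ^ 3) =
    (z * d - d) * (5 * (z * d) ^ 2 - 2 * (z * d) * d + d ^ 2) ^ 2 * (B * e) ^ 3 +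
      (-9 * (z * d) ^ 5 + 54 * (z * d) ^ 4 * d - 85 * (z * d) ^ 3 * d ^ 2 +
        59 * (z * d) ^ 2 * d ^ 3 - 14 * (z * d) * d ^ 4 + 3 * d ^ 5) * (B * e) ^ 2 * e +
      (-9 * (z * d) ^ 4 * d + 60 * (z * d) ^ 3 * d ^ 2 - 64 * (z * d) ^ 2 * d ^ 3 +
        13 * (z * d) * d ^ 4 - 3 * d ^ 5) * (B * e) * e ^ 2 +
      (-9 * (z * d) ^ 3 * d ^ 2 + 23 * (z * d) ^ 2 * d ^ 3 - 4 * (z * d) * d ^ 4 + d ^ 5) *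
        e ^ 3 := by
  ring

theorem cubic_dom {K : Type*} [CommRing K] [IsDomain K] (u z B : K)
    (hd : (1+2*u)*(1+u+u^2) ≠ 0)
    (he : (1+u)*(1+u^2)^2 ≠ 0) (hz : z * ((1+2*u)*(1+u+u^2)) = u)
    (hB : (B - 1) * ((1+u)*(1+u^2)^2) = u) :
    (z - 1) * (5 * z ^ 2 - 2 * z + 1) ^ 2 * B ^ 3 +
      (-9 * z ^ 5 + 54 * z ^ 4 - 85 * z ^ 3 + 59 * z ^ 2 - 14 * z + 3) * B ^ 2 +
      (-9 * z ^ 4 + 60 * z ^ 3 - 64 * z ^ 2 + 13 * z - 3) * B +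
      (-9 * z ^ 3 + 23 * z ^ 2 - 4 * z + 1) = 0 := by
  have hB' : B * ((1+u)*(1+u^2)^2) = (1+u)*(1+u^2)^2 + u := by linear_combination hB
  have h := cubic_hom ((1+2*u)*(1+u+u^2)) ((1+u)*(1+u^2)^2) z B
  rw [hz, hB'] at h
  have hne : ((1+2*u)*(1+u+u^2)) ^ 5 * ((1+u)*(1+u^2)^2) ^ 3 ≠ 0 :=
    mul_ne_zero (pow_ne_zero _ hd) (pow_ne_zero _ he)
  refine (mul_eq_zero.mp (h.trans ?_)).resolve_right hne
  ring

theorem ps_four_ne_zero : (4 : PowerSeries ℚ) ≠ 0 := by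
  have : (4 : PowerSeries ℚ) = PowerSeries.C (4 : ℚ) := (map_ofNat (PowerSeries.C (R := ℚ)) 4).symm
  rw [this]
  intro h
  have := congrArg PowerSeries.constantCoeff h
  norm_num at this

theorem final_alg_C (z u B β : PowerSeries ℚ) (hz : z = PowerSeries.X) (u0 : PowerSeries.constantCoeff u = 0)
    (hune : u ≠ 0)
    (hβ : PowerSeries.constantCoeff β ≠ 0) (hB : (B - 1) * β = z)
    (h0 : (z + (1-z)*u - z*u^2)^2 = 4*z*β*u*(1+u))
    (h1 : 2*(z + (1-z)*u - z*u^2)*((1-z) - 2*z*u) = 4*z*β*(1+2*u)) :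
    (z - 1) * (5 * z ^ 2 - 2 * z + 1) ^ 2 * B ^ 3 +
      (-9 * z ^ 5 + 54 * z ^ 4 - 85 * z ^ 3 + 59 * z ^ 2 - 14 * z + 3) * B ^ 2 +
      (-9 * z ^ 4 + 60 * z ^ 3 - 64 * z ^ 2 + 13 * z - 3) * B +
      (-9 * z ^ 3 + 23 * z ^ 2 - 4 * z + 1) = 0 := by
  have hz0 : z ≠ 0 := by rw [hz]; exact PowerSeries.X_ne_zero
  have key : ∀ f : PowerSeries ℚ, PowerSeries.constantCoeff f ≠ 0 → f ≠ 0 := by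
    rintro f h rfl; simp at h
  have hβ0 := key β hβ
  have h1u : (1 + u) ≠ 0 := key _ (by simp [u0])
  have hE : (z + (1-z)*u - z*u^2) ≠ 0 := by
    intro h; rw [h] at h0
    have : 4*z*β*u*(1+u) ≠ 0 := by
      have h4 : (4 : PowerSeries ℚ) ≠ 0 := ps_four_ne_zero
      simp [h4, hz0, hβ0, hune, h1u]
    exact this (by rw [← h0]; ring)
  have h2 : z * ((1+2*u)*(1+u+u^2)) = u := by
    have : (z + (1-z)*u - z*u^2) * (z * ((1+2*u)*(1+u+u^2)) - u) = 0 := by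
      linear_combination (1+2*u) * h0 - u*(1+u) * h1
    rcases mul_eq_zero.mp this with h | h
    · exact absurd h hE
    · linear_combination h
  have hd : (1+2*u)*(1+u+u^2) ≠ 0 := key _ (by simp [u0])
  have he : (1+u)*(1+u^2)^2 ≠ 0 := key _ (by simp [u0])
  have hβd : β * ((1+2*u)*(1+u+u^2)) = (1+u)*(1+u^2)^2 := by
    have hE2 : (z + (1-z)*u - z*u^2) * ((1+2*u)*(1+u+u^2)) = 2*u*(1+u)*(1+u^2) := by
      linear_combination (1 - u - u^2) * h2
    have : (4 * u^2 * (1+u)) * (β * ((1+2*u)*(1+u+u^2)) - (1+u)*(1+u^2)^2) = 0 := by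
      have e1 : ((z + (1-z)*u - z*u^2) * ((1+2*u)*(1+u+u^2)))^2 = (2*u*(1+u)*(1+u^2))^2 := by rw [hE2]
      linear_combination e1 - ((1+2*u)*(1+u+u^2))^2 * h0 - 4 * β * ((1+2*u)*(1+u+u^2)) * u*(1+u) * h2
    rcases mul_eq_zero.mp this with h | h
    · exfalso
      have h4 : (4 : PowerSeries ℚ) ≠ 0 := ps_four_ne_zero
      have : (4 * u^2 * (1+u)) ≠ 0 := by simp [h4, hune, h1u]
      exact this h
    · linear_combination h
  have hB2 : (B - 1) * ((1+u)*(1+u^2)^2) = u := by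
    rw [← hβd]; linear_combination ((1+2*u)*(1+u+u^2)) * hB + h2
  exact cubic_dom u z B hd he h2 hB2

open PowerSeries in
theorem sub_mul_eq_C (U r : PowerSeries ℚ) (hU : constantCoeff U = 0)
    (g : PowerSeries (PowerSeries ℚ)) (h : (X - C U) * g = C r) : r = 0 := by
  have h1 : ∀ n, coeff n g = U * coeff (n+1) g := by
    intro n
    have := congrArg (coeff (n+1)) h
    rw [sub_mul, map_sub, coeff_succ_X_mul, coeff_C_mul, coeff_C] at this
    simp at this
    linear_combination this
  have h2 : ∀ k n, X ^ k ∣ coeff n g := by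
    intro k
    induction k with
    | zero => intro n; simp
    | succ k ih =>
      intro n
      rw [h1 n, pow_succ']
      exact mul_dvd_mul (X_dvd_iff.mpr hU) (ih _)
  have h3 : coeff 0 g = 0 := by
    ext m
    have := X_pow_dvd_iff.mp (h2 (m+1) 0) m (by omega)
    simpa using this
  have := congrArg (coeff 0) h
  rw [sub_mul, map_sub, coeff_C_mul, h3] at this
  simpa using this.symm

open PowerSeries in
theorem weier (D : PowerSeries (PowerSeries ℚ)) (h0 : coeff 0 D = X)
    (h1 : constantCoeff (coeff 1 D) ≠ 0) :
    ∃ (U : PowerSeries ℚ) (Q : PowerSeries (PowerSeries ℚ)),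
      constantCoeff U = 0 ∧ U ≠ 0 ∧ D = (X - C U) * Q := by
  have hu1 : IsUnit (coeff 1 D) := by
    rw [isUnit_iff_constantCoeff]; exact isUnit_iff_ne_zero.mpr h1
  set I : Ideal (PowerSeries ℚ) := Ideal.span {X} with hI
  have hord : (D.map (Ideal.Quotient.mk I)).order = 1 := by
    have : ((1:ℕ) : ℕ∞) = 1 := rfl
    rw [← this, order_eq_nat]
    constructor
    · rw [coeff_map]
      intro h
      rw [Ideal.Quotient.eq_zero_iff_mem, hI, Ideal.mem_span_singleton, X_dvd_iff] at h
      exact h1 h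
    · intro i hi
      obtain rfl : i = 0 := by omega
      rw [coeff_map, h0, Ideal.Quotient.eq_zero_iff_mem, hI]
      exact Ideal.mem_span_singleton_self _
  have hW : D.IsWeierstrassDivisorAt I := by
    unfold IsWeierstrassDivisorAt
    rw [hord]; simpa using hu1
  have hdiv := hW.isWeierstrassDivisionAt_div_mod (f := X)
  have hdeg := hdiv.degree_lt
  rw [hord] at hdeg
  have hdeg' : (hW.mod X).degree < 1 := by simpa using hdeg
  obtain ⟨U, hU⟩ : ∃ U, hW.mod X = Polynomial.C U :=
    ⟨_, Polynomial.eq_C_of_degree_le_zero (by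
      rw [Polynomial.degree_le_zero_iff]
      exact Polynomial.eq_C_of_natDegree_eq_zero (by
        by_contra hne
        have h2 : (1 : ℕ) ≤ (hW.mod X).natDegree := by omega
        have h3 := Polynomial.le_degree_of_ne_zero (p := hW.mod X) (n := (hW.mod X).natDegree) (by
          intro h4
          rw [Polynomial.coeff_natDegree, Polynomial.leadingCoeff_eq_zero] at h4
          rw [h4] at h2; simp at h2)
        have h5 := lt_of_le_of_lt h3 hdeg'
        have : (hW.mod X).natDegree < 1 := by exact_mod_cast h5
        omega))⟩
  obtain ⟨Q, hQdef⟩ : ∃ Q, Q = hW.div X := ⟨_, rfl⟩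
  rw [← hQdef] at hdiv
  have heq : X = D * Q + C U := by
    have := hdiv.eq_mul_add
    rw [hU] at this
    simpa using this
  have c0 := congrArg (coeff 0) heq
  have c1 := congrArg (coeff 1) heq
  rw [map_add, coeff_mul] at c0 c1
  simp [Finset.Nat.antidiagonal_succ] at c0 c1
  try rw [← coeff_zero_eq_constantCoeff_apply D] at c0
  try rw [← coeff_zero_eq_constantCoeff_apply D] at c1
  rw [h0] at c0 c1
  have c1' := congrArg constantCoeff c1
  simp at c1'
  have hQ0 : constantCoeff (constantCoeff Q) ≠ 0 := by
    intro h; rw [h] at c1'; simp at c1'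
  have hQu : IsUnit Q := by
    rw [isUnit_iff_constantCoeff, isUnit_iff_constantCoeff]; exact isUnit_iff_ne_zero.mpr hQ0
  obtain ⟨q, rfl⟩ := hQu
  refine ⟨U, ((q⁻¹ : (PowerSeries (PowerSeries ℚ))ˣ) : PowerSeries (PowerSeries ℚ)), ?_, ?_, ?_⟩
  · have : U = - (X * constantCoeff (q : PowerSeries (PowerSeries ℚ))) := by linear_combination -c0
    rw [this]; simp
  · rintro rfl
    simp at c0
    rw [c0] at hQ0; simp at hQ0
  · have : X - C U = D * (↑q : PowerSeries (PowerSeries ℚ)) := by linear_combination heq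
    rw [this, mul_assoc, Units.mul_inv, mul_one]

open PowerSeries in
theorem dbl_root (d0 d1 d2 d3 d4 U : PowerSeries ℚ) (hU : constantCoeff U = 0)
    (Q : PowerSeries (PowerSeries ℚ))
    (h : ((X - C U) * Q)^2 = C d0 + C d1 * X + C d2 * X^2 + C d3 * X^3 + C d4 * X^4) :
    d0 + d1 * U + d2 * U^2 + d3 * U^3 + d4 * U^4 = 0 ∧
    d1 + 2 * d2 * U + 3 * d3 * U^2 + 4 * d4 * U^3 = 0 := by
  have e1 : d0 + d1 * U + d2 * U^2 + d3 * U^3 + d4 * U^4 = 0 := by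
    apply sub_mul_eq_C U _ hU ((X - C U) * Q^2 - (C d1 + C d2 * (X + C U) +
      C d3 * (X^2 + X * C U + C U^2) + C d4 * (X^3 + X^2 * C U + X * C U^2 + C U^3)))
    simp only [map_add, map_mul, map_pow]
    linear_combination h
  refine ⟨e1, ?_⟩
  have hne : (X - C U : PowerSeries (PowerSeries ℚ)) ≠ 0 := by
    intro h0
    have := congrArg (coeff 1) h0
    rw [map_sub, coeff_one_X, coeff_C] at this
    simp at this
  apply sub_mul_eq_C U _ hU (Q^2 - (C d2 +
      C d3 * (X + 2 * C U) + C d4 * (X^2 + 2 * X * C U + 3 * C U^2)))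
  apply mul_left_cancel₀ hne
  have e2 := congrArg (C (R := PowerSeries ℚ)) e1
  simp only [map_add, map_mul, map_pow, map_zero, map_ofNat] at e2 ⊢
  linear_combination h + e2

open PowerSeries in
theorem final_alg (B V t : PowerSeries ℚ) (q : PowerSeries (PowerSeries ℚ))
    (hB : B = 1 + X * V) (hV : V = 1 + X * V + X * t * V) (hq0 : coeff 0 q = 0)
    (hP : X * q * (1 - q) = C (X : PowerSeries ℚ) * (X * (q + X) * (1 - q) + q + X
        - C t * X * (1 - q)^2)) :
    (X - 1) * (5 * X ^ 2 - 2 * X + 1) ^ 2 * B ^ 3 +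
      (-9 * X ^ 5 + 54 * X ^ 4 - 85 * X ^ 3 + 59 * X ^ 2 - 14 * X + 3) * B ^ 2 +
      (-9 * X ^ 4 + 60 * X ^ 3 - 64 * X ^ 2 + 13 * X - 3) * B +
      (-9 * X ^ 3 + 23 * X ^ 2 - 4 * X + 1) = 0 := by
  obtain ⟨z, hz⟩ : ∃ z : PowerSeries ℚ, z = X := ⟨_, rfl⟩
  rw [← hz] at hP hV hB ⊢
  obtain ⟨D, hD⟩ : ∃ D : PowerSeries (PowerSeries ℚ), D = X * (2 * C (1 - z - z * t) * q +
      C (z + 2 * z * t - 1) - C z * X) + C z := ⟨_, rfl⟩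
  have hD2 : D^2 = C (z^2) + C (2*z*(1-z-2*(1 - z - z * t))) * X +
      C ((1-z)^2 - 4*(1 - z - z * t)*z - 2*z^2) * X^2 + C (-2*z*(1-z)) * X^3 + C (z^2) * X^4 := by
    rw [hD]
    simp only [map_add, map_mul, map_pow, map_ofNat, map_sub, map_neg, map_one] at hP ⊢
    linear_combination (-4 * X * (1 - C z - C z * C t)) * hP
  have hc : coeff 1 D = z + 2 * z * t - 1 := by
    have e : D = X * (C (2 * (1 - z - z * t)) * q +
      C (z + 2 * z * t - 1) - C z * X) + C z := by
      rw [hD]; simp only [map_mul, map_ofNat]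
    have e1 : coeff 0 (C (2 * (1 - z - z * t)) * q) = 0 := by
      rw [coeff_C_mul, hq0, mul_zero]
    have e2 : coeff 0 (C z * X) = 0 := by
      rw [coeff_C_mul, coeff_zero_X, mul_zero]
    rw [e, map_add, coeff_succ_X_mul, coeff_C, map_sub, map_add, e1, e2, coeff_zero_C]
    simp
  obtain ⟨U, Q, hU0, hUne, hDQ⟩ := weier D
    (by rw [hD, map_add, coeff_zero_X_mul, coeff_zero_C, zero_add, hz])
    (by rw [hc]; simp [hz])
  rw [hDQ] at hD2
  obtain ⟨r0, r1⟩ := dbl_root _ _ _ _ _ U hU0 Q hD2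
  refine final_alg_C z U B (1 - z - z*t) hz hU0 hUne (by simp [hz]) ?_ ?_ ?_
  · rw [hB]; linear_combination (z) * hV
  · linear_combination r0
  · linear_combination r1

def mkc (v : ℕ) (Y : List ℕ) : List ℕ := if v = 0 then Y else v :: Y

def closes : ℕ → List ℕ → List (List ℕ)
  | _, [] => []
  | acc, d :: Y => mkc (d - 1 + acc) Y :: closes (acc + d) Y

def pushL (l : List (List ℕ)) : List (List ℕ) := l.flatMap fun S => [S, 1 :: S]

def closeL (l : List (List ℕ)) : List (List ℕ) := l.flatMap fun S => S :: closes 0 S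

def Vl : ℕ → List (List ℕ)
  | 0 => [[]]
  | n + 1 => closeL (pushL (Vl n))

def PosL (S : List ℕ) : Prop := ∀ x ∈ S, 0 < x

theorem posL_cons {d : ℕ} {S : List ℕ} : PosL (d :: S) ↔ 0 < d ∧ PosL S := by
  simp [PosL]

theorem closes_pos (Y : List ℕ) : ∀ acc, PosL Y → ∀ S ∈ closes acc Y, PosL S := by
  induction Y with
  | nil => intro acc _ S h; simp [closes] at h
  | cons d Y ih =>
    intro acc hY S hS
    rw [posL_cons] at hY
    simp only [closes, List.mem_cons] at hS
    rcases hS with rfl | hS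
    · unfold mkc
      split_ifs with h
      · exact hY.2
      · rw [posL_cons]; exact ⟨by omega, hY.2⟩
    · exact ih _ hY.2 S hS

theorem Vl_pos (n : ℕ) : ∀ S ∈ Vl n, PosL S := by
  induction n with
  | zero => intro S h; simp [Vl] at h; subst h; simp [PosL]
  | succ n ih =>
    intro S h
    simp only [Vl, closeL, pushL, List.mem_flatMap] at h
    obtain ⟨Y, ⟨Z, hZ, hY⟩, hS⟩ := h
    have hYp : PosL Y := by
      simp at hY
      rcases hY with rfl | rfl
      · exact ih _ hZ
      · rw [posL_cons]; exact ⟨one_pos, ih _ hZ⟩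
    simp only [List.mem_cons] at hS
    rcases hS with rfl | hS
    · exact hYp
    · exact closes_pos _ _ hYp _ hS

theorem pushL_pos (l : List (List ℕ)) (h : ∀ S ∈ l, PosL S) : ∀ S ∈ pushL l, PosL S := by
  intro S hS
  simp only [pushL, List.mem_flatMap] at hS
  obtain ⟨Z, hZ, hY⟩ := hS
  simp at hY
  rcases hY with rfl | rfl
  · exact h _ hZ
  · rw [posL_cons]; exact ⟨one_pos, h _ hZ⟩

theorem pos_sum_zero {S : List ℕ} (h : PosL S) (h0 : S.sum = 0) : S = [] := by
  cases S with
  | nil => rfl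
  | cons a S => rw [posL_cons] at h; simp at h0; omega

theorem count_closes_nil (Y : List ℕ) : ∀ acc, PosL Y →
    (closes acc Y).count [] = if acc = 0 ∧ Y = [1] then 1 else 0 := by
  induction Y with
  | nil => intro acc _; simp [closes]
  | cons d Y ih =>
    intro acc hY
    rw [posL_cons] at hY
    rw [closes, List.count_cons, ih _ hY.2]
    have : ¬ (acc + d = 0) := by omega
    unfold mkc
    split_ifs <;> simp_all <;> omega

theorem suffix_cons' {S0 Y : List ℕ} {d : ℕ} : S0 <:+ d :: Y ↔ S0 = d :: Y ∨ S0 <:+ Y :=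
  List.suffix_cons_iff

theorem suffix_sum {S0 Y : List ℕ} (h : S0 <:+ Y) : S0.sum ≤ Y.sum := by
  obtain ⟨Z, rfl⟩ := h; simp

theorem count_closes_cons (c : ℕ) (hc : 0 < c) (S0 : List ℕ) (Y : List ℕ) : ∀ acc, PosL Y →
    (closes acc Y).count (c :: S0) = (if acc = 0 ∧ Y = 1 :: c :: S0 then 1 else 0) +
      (if (S0 <:+ Y ∧ S0 ≠ Y) ∧ Y.sum + acc = S0.sum + (c + 1) then 1 else 0) := by
  induction Y with
  | nil => intro acc _; simp [closes]
  | cons d Y ih =>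
    intro acc hY
    rw [posL_cons] at hY
    rw [closes, List.count_cons, ih _ hY.2]
    have h1 : ¬ (acc + d = 0) := by omega
    have hs : (S0 <:+ d :: Y ∧ S0 ≠ d :: Y) ↔ S0 = Y ∨ (S0 <:+ Y ∧ S0 ≠ Y) := by
      rw [suffix_cons']
      constructor
      · rintro ⟨h | h, h'⟩
        · exact absurd h h'
        · by_cases e : S0 = Y
          · exact Or.inl e
          · exact Or.inr ⟨h, e⟩
      · rintro (h | h)
        · subst h; exact ⟨Or.inr (List.suffix_refl _), by intro h; have := congrArg List.length h; simp at this⟩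
        · exact ⟨Or.inr h.1, by
            rintro rfl
            have := h.1.length_le
            simp at this⟩
    simp only [hs]
    by_cases e : S0 = Y
    · subst e
      have : (acc = 0 ∧ d :: S0 = 1 :: c :: S0) ↔ False := by
        simp
      have h4 : (mkc (d - 1 + acc) S0 == c :: S0) =
          decide (d + S0.sum + acc = S0.sum + (c + 1)) := by
        unfold mkc
        rw [Bool.eq_iff_iff]
        split_ifs with h
        · simp
          omega
        · simp
          omega
      simp only [this, h1, h4]
      simp
    · simp only [h1, e]
      simp only [List.sum_cons]
      have h2 : Y.sum + (acc + d) = d + Y.sum + acc := by omega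
      have h3 : (mkc (d - 1 + acc) Y == c :: S0) = decide (acc = 0 ∧ d :: Y = 1 :: c :: S0) := by
        unfold mkc
        rw [Bool.eq_iff_iff]
        split_ifs with h
        · have : acc = 0 ∧ d = 1 := by omega
          simp [this]
        · have : ¬ (acc = 0 ∧ d = 1) := by omega
          simp
          constructor
          · rintro ⟨_, rfl⟩; exact absurd rfl e
          · rintro ⟨a, b, _⟩; exact absurd ⟨a, b⟩ this
      rw [h2, h3]
      simp
      omega

def Psum (S0 : List ℕ) (s : ℕ) (Y : List ℕ) : Bool := decide (S0 <:+ Y ∧ Y.sum = S0.sum + s)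

theorem count_pushL_nil (l : List (List ℕ)) : (pushL l).count [] = l.count [] := by
  unfold pushL
  induction l with
  | nil => simp
  | cons Y l ih => simp [List.flatMap_cons, ih, List.count_cons]

theorem count_pushL_one (l : List (List ℕ)) (S : List ℕ) :
    (pushL l).count (1 :: S) = l.count (1 :: S) + l.count S := by
  unfold pushL
  induction l with
  | nil => simp
  | cons Y l ih => simp [List.flatMap_cons, ih, List.count_cons]; omega

theorem count_pushL_ne (l : List (List ℕ)) (S : List ℕ) (c : ℕ) (hc : c ≠ 1) :
    (pushL l).count (c :: S) = l.count (c :: S) := by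
  unfold pushL
  induction l with
  | nil => simp
  | cons Y l ih => simp [List.flatMap_cons, ih, List.count_cons, hc.symm]

theorem count_closeL_nil (l : List (List ℕ)) (hl : ∀ S ∈ l, PosL S) :
    (closeL l).count [] = l.count [] + l.count [1] := by
  unfold closeL
  induction l with
  | nil => simp
  | cons Y l ih =>
    have h1 := ih (fun S hS => hl S (List.mem_cons_of_mem _ hS))
    have h2 := count_closes_nil Y 0 (hl Y List.mem_cons_self)
    rw [List.flatMap_cons, List.count_append, h1, List.count_cons, h2]
    simp [List.count_cons]; omega

theorem count_closeL_cons (c : ℕ) (hc : 0 < c) (S0 : List ℕ) (l : List (List ℕ))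
    (hl : ∀ S ∈ l, PosL S) :
    (closeL l).count (c :: S0) = l.count (c :: S0) + l.count (1 :: c :: S0) +
      l.countP (Psum S0 (c + 1)) := by
  unfold closeL
  induction l with
  | nil => simp
  | cons Y l ih =>
    have h1 := ih (fun S hS => hl S (List.mem_cons_of_mem _ hS))
    have h2 := count_closes_cons c hc S0 Y 0 (hl Y List.mem_cons_self)
    have h3 : ((S0 <:+ Y ∧ S0 ≠ Y) ∧ Y.sum + 0 = S0.sum + (c + 1)) ↔ Psum S0 (c+1) Y = true := by
      simp only [Psum, decide_eq_true_eq, add_zero]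
      constructor
      · rintro ⟨⟨a, _⟩, b⟩; exact ⟨a, b⟩
      · rintro ⟨a, b⟩; exact ⟨⟨a, by rintro rfl; omega⟩, b⟩
    rw [List.flatMap_cons, List.count_append, h1, List.count_cons, h2, if_congr h3 rfl rfl]
    simp [List.count_cons, List.countP_cons]; omega

theorem Psum_zero {S0 Y : List ℕ} (hY : PosL Y) : Psum S0 0 Y = true ↔ Y = S0 := by
  simp only [Psum, decide_eq_true_eq]
  constructor
  · rintro ⟨⟨Z, rfl⟩, h⟩
    have : Z = [] := by
      apply pos_sum_zero
      · intro x hx; exact hY x (by simp [hx])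
      · simpa using h
    simp [this]
  · rintro rfl; simp

theorem Psum_succ {S0 Y : List ℕ} (s : ℕ) (hs : 0 < s) (hY : PosL Y) :
    (if Psum S0 s Y = true then 1 else 0) =
      ∑ c ∈ Finset.Icc 1 s, (if Psum (c :: S0) (s - c) Y = true then 1 else 0) := by
  by_cases h : Psum S0 s Y = true
  · rw [if_pos h]
    simp only [Psum, decide_eq_true_eq] at h
    obtain ⟨⟨Z, rfl⟩, h⟩ := h
    simp at h
    rcases List.eq_nil_or_concat Z with rfl | ⟨Z', c, rfl⟩
    · simp at h; omega
    · have hcp : 0 < c := hY c (by simp)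
      simp at h
      rw [Finset.sum_eq_single c]
      · rw [if_pos]
        simp only [Psum, decide_eq_true_eq]
        refine ⟨⟨Z', by simp⟩, ?_⟩
        simp; omega
      · intro b hb hbc
        rw [if_neg]
        simp only [Psum, decide_eq_true_eq]
        rintro ⟨⟨T, hT⟩, _⟩
        have e : (T ++ [b]) ++ S0 = (Z' ++ [c]) ++ S0 := by simpa using hT
        have e2 := List.append_cancel_right e
        have e3 := List.append_inj_right' e2 rfl
        simp at e3; exact hbc e3
      · intro hn; exfalso; apply hn; simp; omega
  · rw [if_neg h]
    symm
    apply Finset.sum_eq_zero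
    intro c hc
    rw [if_neg]
    intro h'
    apply h
    simp only [Psum, decide_eq_true_eq] at h' ⊢
    obtain ⟨⟨T, hT⟩, h2⟩ := h'
    simp at hc
    refine ⟨⟨T ++ [c], by simpa using hT⟩, ?_⟩
    simp at h2; omega

theorem countP_Psum_zero (S0 : List ℕ) (l : List (List ℕ)) (hl : ∀ S ∈ l, PosL S) :
    l.countP (Psum S0 0) = l.count S0 := by
  rw [List.count]
  apply List.countP_congr
  intro Y hY
  rw [Psum_zero (hl Y hY)]; simp

theorem countP_Psum_succ (S0 : List ℕ) (s : ℕ) (hs : 0 < s) (l : List (List ℕ))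
    (hl : ∀ S ∈ l, PosL S) :
    l.countP (Psum S0 s) = ∑ c ∈ Finset.Icc 1 s, l.countP (Psum (c :: S0) (s - c)) := by
  induction l with
  | nil => simp
  | cons Y l ih =>
    have h1 := ih (fun S hS => hl S (List.mem_cons_of_mem _ hS))
    simp only [List.countP_cons, Finset.sum_add_distrib]
    rw [h1, Psum_succ s hs (hl Y List.mem_cons_self)]

noncomputable section

open PowerSeries

def Vs (S : List ℕ) : PowerSeries ℚ := PowerSeries.mk fun n => ((Vl n).count S : ℚ)
def Ys (S : List ℕ) : PowerSeries ℚ := PowerSeries.mk fun n => ((pushL (Vl n)).count S : ℚ)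
def Gs (S : List ℕ) (s : ℕ) : PowerSeries ℚ :=
  PowerSeries.mk fun n => ((pushL (Vl n)).countP (Psum S s) : ℚ)

theorem Ys_nil : Ys [] = Vs [] := by
  ext n; simp [Ys, Vs, count_pushL_nil]

theorem Ys_one (S : List ℕ) : Ys (1 :: S) = Vs (1 :: S) + Vs S := by
  ext n; simp [Ys, Vs, count_pushL_one]

theorem Ys_ne (S : List ℕ) (c : ℕ) (hc : c ≠ 1) : Ys (c :: S) = Vs (c :: S) := by
  ext n; simp [Ys, Vs, count_pushL_ne _ _ _ hc]

theorem Gs_zero (S : List ℕ) : Gs S 0 = Ys S := by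
  ext n; simp [Ys, Gs, countP_Psum_zero _ _ (pushL_pos _ (Vl_pos n))]

theorem Gs_succ (S : List ℕ) (s : ℕ) (hs : 0 < s) :
    Gs S s = ∑ c ∈ Finset.Icc 1 s, Gs (c :: S) (s - c) := by
  ext n; simp [Gs, countP_Psum_succ _ s hs _ (pushL_pos _ (Vl_pos n))]

theorem Vs_nil : Vs [] = 1 + X * (Ys [] + Ys [1]) := by
  ext n
  cases n with
  | zero => simp [Vs, Vl]
  | succ n =>
    rw [map_add, coeff_succ_X_mul]
    simp [Vs, Ys, Vl, count_closeL_nil _ (pushL_pos _ (Vl_pos n)), coeff_one]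

theorem Vs_cons (c : ℕ) (hc : 0 < c) (S : List ℕ) :
    Vs (c :: S) = X * (Ys (c :: S) + Ys (1 :: c :: S) + Gs S (c + 1)) := by
  ext n
  cases n with
  | zero => simp [Vs, Vl]
  | succ n =>
    rw [coeff_succ_X_mul]
    simp [Vs, Ys, Gs, Vl, count_closeL_cons c hc S _ (pushL_pos _ (Vl_pos n))]

theorem prod_dvd (n : ℕ) : ∀ D S, PosL D → X ^ n ∣ Vs (D ++ S) * Vs [] - Vs D * Vs S := by
  induction n with
  | zero => intro D S _; simp
  | succ n ih =>
    have hY : ∀ c D S, 0 < c → PosL D →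
        X ^ n ∣ Ys (c :: D ++ S) * Vs [] - Ys (c :: D) * Vs S := by
      intro c D S hc hD
      have h1 := ih (c :: D) S (posL_cons.2 ⟨hc, hD⟩)
      by_cases h : c = 1
      · subst h
        rw [List.cons_append, Ys_one, Ys_one]
        rw [List.cons_append] at h1
        have h2 := ih D S hD
        have := dvd_add h1 h2
        refine this.trans (dvd_of_eq ?_)
        ring
      · rw [List.cons_append, Ys_ne _ _ h, Ys_ne _ _ h]
        exact h1
    have hG : ∀ s, 0 < s → ∀ D S, PosL D →
        X ^ n ∣ Gs (D ++ S) s * Vs [] - Gs D s * Vs S := by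
      intro s
      induction s using Nat.strong_induction_on with
      | _ s ihs =>
        intro hs D S hD
        rw [Gs_succ _ s hs, Gs_succ _ s hs, Finset.sum_mul, Finset.sum_mul,
          ← Finset.sum_sub_distrib]
        apply Finset.dvd_sum
        intro c hc
        simp at hc
        by_cases h : c = s
        · subst h
          rw [Nat.sub_self, Gs_zero, Gs_zero]
          exact hY c D S (by omega) hD
        · exact ihs (s - c) (by omega) (by omega) (c :: D) S (posL_cons.2 ⟨by omega, hD⟩)
    intro D S hD
    cases D with
    | nil => simp [mul_comm]
    | cons c D =>
      obtain ⟨hc, hD⟩ := posL_cons.1 hD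
      rw [List.cons_append, Vs_cons c hc, Vs_cons c hc, pow_succ']
      have h1 := hY c D S hc hD
      have h2 := hY 1 (c :: D) S one_pos (posL_cons.2 ⟨hc, hD⟩)
      have h3 := hG (c + 1) (by omega) D S hD
      have := mul_dvd_mul_left X (dvd_add (dvd_add h1 h2) h3)
      refine this.trans (dvd_of_eq ?_)
      simp only [List.cons_append]
      ring

theorem ps_zero_of_dvd (f : PowerSeries ℚ) (h : ∀ n, X ^ n ∣ f) : f = 0 := by
  ext m
  have := X_pow_dvd_iff.mp (h (m+1)) m (by omega)
  simpa using this

theorem Vs_prod (D S : List ℕ) (hD : PosL D) : Vs (D ++ S) * Vs [] = Vs D * Vs S :=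
  sub_eq_zero.1 (ps_zero_of_dvd _ fun n => prod_dvd n D S hD)

theorem Vs_prod1 (c : ℕ) (hc : 0 < c) (S : List ℕ) : Vs (c :: S) * Vs [] = Vs [c] * Vs S :=
  Vs_prod [c] S (by simp [PosL, hc])

theorem Ys_prod1 (c : ℕ) (hc : 0 < c) (S : List ℕ) : Ys (c :: S) * Vs [] = Ys [c] * Vs S := by
  by_cases h : c = 1
  · subst h; rw [Ys_one, Ys_one]; linear_combination Vs_prod1 1 hc S
  · rw [Ys_ne _ _ h, Ys_ne _ _ h]; exact Vs_prod1 c hc S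

theorem Vs_nil_ne : Vs [] ≠ 0 := by
  intro h
  have := congrArg (coeff 0) h
  simp [Vs, Vl] at this

theorem Gs_prod (s : ℕ) : 0 < s → ∀ S, Gs S s * Vs [] = Gs [] s * Vs S := by
  induction s using Nat.strong_induction_on with
  | _ s ihs =>
    intro hs S
    rw [Gs_succ _ s hs, Gs_succ _ s hs, Finset.sum_mul, Finset.sum_mul]
    apply Finset.sum_congr rfl
    intro c hc
    simp at hc
    by_cases h : c = s
    · subst h
      rw [Nat.sub_self, Gs_zero, Gs_zero]
      exact Ys_prod1 c (by omega) S
    · have e1 := ihs (s - c) (by omega) (by omega) (c :: S)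
      have e2 := ihs (s - c) (by omega) (by omega) [c]
      have e3 := Vs_prod1 c (by omega) S
      apply mul_right_cancel₀ Vs_nil_ne
      linear_combination Vs [] * e1 - Vs S * e2 + Gs [] (s-c) * e3

def qc (c : ℕ) : PowerSeries ℚ := if c = 0 then 0 else Vs [c] * (Vs [])⁻¹
def xc (c : ℕ) : PowerSeries ℚ := if c = 0 then 0 else Gs [] c * (Vs [])⁻¹

theorem Vinv : Vs [] * (Vs [])⁻¹ = 1 := by
  apply PowerSeries.mul_inv_cancel
  simp [Vs, Vl]

theorem qc_mul (c : ℕ) (hc : 0 < c) : qc c * Vs [] = Vs [c] := by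
  rw [qc, if_neg (by omega)]; linear_combination Vs [c] * Vinv

theorem xc_mul (c : ℕ) (hc : 0 < c) : xc c * Vs [] = Gs [] c := by
  rw [xc, if_neg (by omega)]; linear_combination Gs [] c * Vinv

theorem Ys_single (c : ℕ) (hc : 0 < c) :
    Ys [c] = (qc c + if c = 1 then 1 else 0) * Vs [] := by
  split_ifs with h
  · subst h; rw [Ys_one]; linear_combination -qc_mul 1 hc
  · rw [Ys_ne _ _ h]; linear_combination -qc_mul c hc

theorem xc_rec (s : ℕ) (hs : 0 < s) :
    xc s = qc s + (if s = 1 then 1 else 0) + ∑ c ∈ Finset.Ico 1 s, qc c * xc (s - c) := by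
  apply mul_right_cancel₀ Vs_nil_ne
  rw [xc_mul s hs, Gs_succ _ s hs, ← Finset.Ico_insert_right (show 1 ≤ s by omega),
    Finset.sum_insert (by simp), Nat.sub_self, Gs_zero, Ys_single s hs, add_mul _ (Finset.sum _ _),
    Finset.sum_mul]
  congr 1
  apply Finset.sum_congr rfl
  intro c hc
  simp at hc
  have e := Gs_prod (s - c) (by omega) [c]
  have e1 := qc_mul c (by omega)
  have e2 := xc_mul (s - c) (by omega)
  apply mul_right_cancel₀ Vs_nil_ne
  rw [e, ← e1, ← e2]; ring

theorem qc_rec (c : ℕ) (hc : 0 < c) :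
    qc c = X * (qc c + (if c = 1 then 1 else 0) + (qc 1 + 1) * qc c + xc (c + 1)) := by
  apply mul_right_cancel₀ Vs_nil_ne
  have e := Vs_cons c hc []
  rw [Ys_single c hc, Ys_one] at e
  have e1 := Vs_prod1 1 one_pos [c]
  rw [← qc_mul 1 one_pos] at e1
  have e1' : Vs [1, c] = qc 1 * Vs [c] := by
    apply mul_right_cancel₀ Vs_nil_ne
    linear_combination e1
  rw [e1', ← qc_mul c hc, ← xc_mul (c+1) (by omega)] at e
  linear_combination e

theorem V_eq : Vs [] = 1 + X * Vs [] + X * (qc 1 + 1) * Vs [] := by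
  have := Vs_nil
  rw [Ys_nil, Ys_single 1 one_pos] at this
  simp at this
  linear_combination this

def qq : PowerSeries (PowerSeries ℚ) := PowerSeries.mk qc
def xx : PowerSeries (PowerSeries ℚ) := PowerSeries.mk xc

theorem xx_eq : xx = qq + X + qq * xx := by
  ext1 s
  rw [map_add, map_add, coeff_mul, coeff_X]
  simp only [xx, qq, coeff_mk]
  cases s with
  | zero => simp [xc, qc]
  | succ s =>
    rw [xc_rec (s+1) (by omega)]
    congr 1
    rw [Finset.Nat.sum_antidiagonal_eq_sum_range_succ_mk, Finset.sum_range_succ,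
      Finset.sum_range_eq_add_Ico _ (by omega)]
    simp [xc, qc]

theorem qq_eq : X * qq = C (X : PowerSeries ℚ) *
    (X * (qq + X) + C (qc 1 + 1) * (X * qq) + xx - C (qc 1 + 1) * X) := by
  ext1 s
  rw [coeff_C_mul, map_sub, map_add, map_add, coeff_C_mul, coeff_C_mul]
  cases s with
  | zero => simp [xx, xc]
  | succ c =>
    rw [coeff_succ_X_mul, coeff_succ_X_mul, map_add, coeff_X, coeff_X]
    simp only [xx, qq, coeff_mk]
    cases c with
    | zero =>
      have := xc_rec 1 one_pos
      simp at this
      simp [qc] at this ⊢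
      rw [this]; simp
    | succ c =>
      have := qc_rec (c+1) (by omega)
      simp only [Nat.add_eq_right, Nat.add_eq_zero_iff] at this ⊢
      simp at this ⊢
      linear_combination this

theorem hP_main : X * qq * (1 - qq) = C (X : PowerSeries ℚ) * (X * (qq + X) * (1 - qq) + qq + X
        - C (qc 1 + 1) * X * (1 - qq)^2) := by
  linear_combination (1 - qq) * qq_eq + C (X : PowerSeries ℚ) * xx_eq
end

def mkL (l : List ℕ) (X : List (List ℕ)) : List (List ℕ) := if l = [] then X else l :: X

def closesLL : List ℕ → List (List ℕ) → List (List (List ℕ))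
  | _, [] => []
  | acc, C :: X => mkL (C.tail ++ acc) X :: closesLL (C ++ acc) X

def Fifo (A : Finset (ℕ × ℕ)) (l : List ℕ) : Prop :=
  ∀ b ∈ l, ∀ c ∈ l, b < c → ∀ y x, (b, y) ∈ A → (c, x) ∈ A → y < x

def Av312 (A : Finset (ℕ × ℕ)) : Prop :=
  ∀ a b c x w y, a < b → b < c → c < x → x < w → w < y →
    (a, x) ∈ A → (b, y) ∈ A → (c, w) ∈ A → False

structure Good (o c e : ℕ) (L : List (List ℕ)) (A : Finset (ℕ × ℕ)) : Prop where
  dom : ∀ i j, (i, j) ∈ A → (i ∈ L.flatten ∨ o ≤ i) ∧ c ≤ j ∧ j ≤ e ∧ i < j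
  inj1 : ∀ i j j', (i, j) ∈ A → (i, j') ∈ A → j = j'
  inj2 : ∀ i i' j, (i, j) ∈ A → (i', j) ∈ A → i = i'
  cov : ∀ i ∈ L.flatten, ∃ j, (i, j) ∈ A
  fifo : ∀ C ∈ L, Fifo A C
  av : Av312 A

open Classical in
noncomputable def GS (o c e : ℕ) (L : List (List ℕ)) : Finset (Finset (ℕ × ℕ)) :=
  (Finset.range (e + 1) ×ˢ Finset.range (e + 1)).powerset.filter (Good o c e L)

theorem mem_GS {o c e : ℕ} {L : List (List ℕ)} {A : Finset (ℕ × ℕ)} :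
    A ∈ GS o c e L ↔ Good o c e L A := by
  classical
  unfold GS
  rw [Finset.mem_filter]
  refine ⟨fun h => h.2, fun h => ⟨?_, h⟩⟩
  rw [Finset.mem_powerset]
  rintro ⟨i, j⟩ hij
  have := h.dom i j hij
  simp; omega

structure Valid (o : ℕ) (L : List (List ℕ)) : Prop where
  ne : ∀ C ∈ L, C ≠ []
  inc : ∀ C ∈ L, C.Pairwise (· < ·)
  pw : L.Pairwise (fun U D => ∀ x ∈ U, ∀ y ∈ D, y < x)
  lt : ∀ x ∈ L.flatten, x < o

theorem mem_mkL_flatten {l : List ℕ} {X : List (List ℕ)} {x : ℕ} :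
    x ∈ (mkL l X).flatten ↔ x ∈ l ∨ x ∈ X.flatten := by
  unfold mkL
  split_ifs with h
  · subst h; simp
  · rw [List.flatten_cons, List.mem_append]

theorem fifo_mkL {A : Finset (ℕ × ℕ)} {l : List ℕ} {X : List (List ℕ)} :
    (∀ C ∈ mkL l X, Fifo A C) ↔ Fifo A l ∧ ∀ C ∈ X, Fifo A C := by
  unfold mkL
  split_ifs with h
  · subst h; simp [Fifo]
  · simp

theorem close_bij (m e p : ℕ) (C acc : List ℕ) (Z X : List (List ℕ)) (hme : m ≤ e)
    (hacc : ∀ x, x ∈ acc ↔ x ∈ Z.flatten)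
    (h1 : ∀ b ∈ C, p < b) (h2 : ∀ b ∈ acc, p < b) (h3 : ∀ x ∈ X.flatten, x < p)
    (h4 : p < m) (h5 : ∀ b ∈ C, b < m) (h6 : ∀ b ∈ acc, b < m) :
    ((GS m m e (Z ++ (p :: C) :: X)).filter (fun A => (p, m) ∈ A)).card =
      (GS m (m + 1) e (mkL (C ++ acc) X)).card := by
  have hold : ∀ x, x ∈ (Z ++ (p :: C) :: X).flatten ↔
      x = p ∨ x ∈ C ∨ x ∈ acc ∨ x ∈ X.flatten := by
    intro x
    rw [List.flatten_append, List.mem_append, ← hacc, List.flatten_cons, List.mem_append,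
      List.mem_cons]
    tauto
  have hnew : ∀ x, x ∈ (mkL (C ++ acc) X).flatten ↔ x ∈ C ∨ x ∈ acc ∨ x ∈ X.flatten := by
    intro x
    rw [mem_mkL_flatten, List.mem_append, or_assoc]
  have hpnew : p ∉ (mkL (C ++ acc) X).flatten := by
    rw [hnew]
    rintro (h | h | h)
    · exact absurd (h1 p h) (lt_irrefl _)
    · exact absurd (h2 p h) (lt_irrefl _)
    · exact absurd (h3 p h) (lt_irrefl _)
  refine Finset.card_nbij' (fun A => A.erase (p, m)) (fun A => insert (p, m) A) ?_ ?_ ?_ ?_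
  · intro A hA
    rw [Finset.mem_coe, Finset.mem_filter, mem_GS] at hA
    obtain ⟨hA, hpm⟩ := hA
    rw [Finset.mem_coe, mem_GS]
    have hsub : ∀ i j, (i, j) ∈ A.erase (p, m) → (i, j) ∈ A ∧ i ≠ p ∧ j ≠ m := by
      intro i j h
      rw [Finset.mem_erase] at h
      refine ⟨h.2, ?_, ?_⟩
      · rintro rfl
        exact h.1 (by rw [hA.inj1 _ _ _ h.2 hpm])
      · rintro rfl
        exact h.1 (by rw [hA.inj2 _ _ _ h.2 hpm])
    refine ⟨?_, ?_, ?_, ?_, ?_, ?_⟩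
    · intro i j h
      obtain ⟨h, hi, hj⟩ := hsub i j h
      have := hA.dom i j h
      rw [hold] at this
      rw [hnew]
      refine ⟨?_, by omega, by omega, by omega⟩
      tauto
    · intro i j j' h h'
      exact hA.inj1 i j j' (hsub _ _ h).1 (hsub _ _ h').1
    · intro i i' j h h'
      exact hA.inj2 i i' j (hsub _ _ h).1 (hsub _ _ h').1
    · intro i hi
      have hip : i ≠ p := by rintro rfl; exact hpnew hi
      obtain ⟨j, hj⟩ := hA.cov i ((hold i).2 (Or.inr ((hnew i).1 hi)))
      exact ⟨j, Finset.mem_erase.2 ⟨by simp [hip], hj⟩⟩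
    · rw [fifo_mkL]
      constructor
      · intro b hb c hc hbc y x hy hx
        obtain ⟨hy, _, hym⟩ := hsub _ _ hy
        obtain ⟨hx, _, hxm⟩ := hsub _ _ hx
        have dy := hA.dom _ _ hy
        have dx := hA.dom _ _ hx
        by_contra hlt
        have hne : x ≠ y := by
          rintro rfl
          have := hA.inj2 _ _ _ hy hx
          omega
        have hcm : c < m := by
          rcases List.mem_append.1 hc with h | h
          · exact h5 c h
          · exact h6 c h
        have hpb : p < b := by
          rcases List.mem_append.1 hb with h | h
          · exact h1 b h
          · exact h2 b h
        exact hA.av p b c m x y hpb hbc hcm (by omega) (by omega) hpm hy hx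
      · intro D hD b hb c hc hbc y x hy hx
        exact hA.fifo D (by simp [hD]) b hb c hc hbc y x (hsub _ _ hy).1 (hsub _ _ hx).1
    · intro a b c x w y q1 q2 q3 q4 q5 r1 r2 r3
      exact hA.av a b c x w y q1 q2 q3 q4 q5 (hsub _ _ r1).1 (hsub _ _ r2).1 (hsub _ _ r3).1
  · intro A hA
    rw [Finset.mem_coe, mem_GS] at hA
    rw [Finset.mem_coe, Finset.mem_filter, mem_GS]
    refine ⟨?_, Finset.mem_insert_self _ _⟩
    have hcase : ∀ i j, (i, j) ∈ insert (p, m) A →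
        (i = p ∧ j = m) ∨ ((i, j) ∈ A ∧ i ≠ p ∧ m < j) := by
      intro i j h
      rw [Finset.mem_insert] at h
      rcases h with h | h
      · left; simpa using h
      · right
        have := hA.dom i j h
        refine ⟨h, ?_, by omega⟩
        rintro rfl
        rcases this.1 with h' | h'
        · exact hpnew h'
        · omega
    have hf := fifo_mkL.1 hA.fifo
    refine ⟨?_, ?_, ?_, ?_, ?_, ?_⟩
    · intro i j h
      rw [hold]
      rcases hcase i j h with ⟨rfl, rfl⟩ | ⟨h, _, _⟩
      · exact ⟨Or.inl (Or.inl rfl), by omega, by omega, by omega⟩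
      · have := hA.dom i j h
        rw [hnew] at this
        refine ⟨by tauto, by omega, by omega, by omega⟩
    · intro i j j' h h'
      rcases hcase _ _ h with ⟨q1, q2⟩ | ⟨q1, q2, q3⟩ <;>
      rcases hcase _ _ h' with ⟨r1, r2⟩ | ⟨r1, r2, r3⟩
      · omega
      · omega
      · omega
      · exact hA.inj1 _ _ _ q1 r1
    · intro i i' j h h'
      rcases hcase _ _ h with ⟨q1, q2⟩ | ⟨q1, q2, q3⟩ <;>
      rcases hcase _ _ h' with ⟨r1, r2⟩ | ⟨r1, r2, r3⟩
      · omega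
      · omega
      · omega
      · exact hA.inj2 _ _ _ q1 r1
    · intro i hi
      rcases (hold i).1 hi with rfl | hi
      · exact ⟨m, Finset.mem_insert_self _ _⟩
      · obtain ⟨j, hj⟩ := hA.cov i ((hnew i).2 hi)
        exact ⟨j, Finset.mem_insert_of_mem hj⟩
    · intro D hD b hb c hc hbc y x hy hx
      have hpD : p ∈ D → D = p :: C := by
        intro hp
        rw [List.mem_append, List.mem_cons] at hD
        rcases hD with hD | hD | hD
        · have := h2 p ((hacc p).2 (List.mem_flatten.2 ⟨D, hD, hp⟩)); omega
        · exact hD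
        · have := h3 p (List.mem_flatten.2 ⟨D, hD, hp⟩); omega
      rcases hcase _ _ hy with ⟨q1, q2⟩ | ⟨q1, q2, q3⟩ <;>
      rcases hcase _ _ hx with ⟨r1, r2⟩ | ⟨r1, r2, r3⟩
      · omega
      · omega
      · exfalso
        have hD' := hpD (r1 ▸ hc)
        rw [hD', List.mem_cons] at hb
        rcases hb with hb | hb
        · omega
        · have := h1 b hb; omega
      · rw [List.mem_append, List.mem_cons] at hD
        rcases hD with hD | hD | hD
        · refine hf.1 b ?_ c ?_ hbc y x q1 r1
          · exact List.mem_append_right _ ((hacc b).2 (List.mem_flatten.2 ⟨D, hD, hb⟩))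
          · exact List.mem_append_right _ ((hacc c).2 (List.mem_flatten.2 ⟨D, hD, hc⟩))
        · rw [hD, List.mem_cons] at hb hc
          refine hf.1 b ?_ c ?_ hbc y x q1 r1
          · exact List.mem_append_left _ (hb.resolve_left q2)
          · exact List.mem_append_left _ (hc.resolve_left r2)
        · exact hf.2 D hD b hb c hc hbc y x q1 r1
    · intro a b c x w y q1 q2 q3 q4 q5 r1 r2 r3
      rcases hcase _ _ r2 with ⟨u1, u2⟩ | ⟨u1, u2, u3⟩
      · rcases hcase _ _ r1 with ⟨v1, v2⟩ | ⟨v1, v2, v3⟩ <;> omega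
      rcases hcase _ _ r3 with ⟨w1, w2⟩ | ⟨w1, w2, w3⟩
      · rcases hcase _ _ r1 with ⟨v1, v2⟩ | ⟨v1, v2, v3⟩ <;> omega
      rcases hcase _ _ r1 with ⟨v1, v2⟩ | ⟨v1, v2, v3⟩
      · have key : ∀ t s, (t, s) ∈ A → p < t → t < m → t ∈ C ++ acc := by
          intro t s ht hpt htm
          have := (hA.dom t s ht).1
          rw [hnew] at this
          rw [List.mem_append]
          rcases this with (h | h | h) | h
          · exact Or.inl h
          · exact Or.inr h
          · have := h3 t h; omega
          · omega
        have := hf.1 b (key b y u1 (by omega) (by omega)) c (key c w w1 (by omega) (by omega)) q2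
          y w u1 w1
        omega
      · exact hA.av a b c x w y q1 q2 q3 q4 q5 v1 u1 w1
  · intro A hA
    rw [Finset.mem_coe, Finset.mem_filter] at hA
    exact Finset.insert_erase hA.2
  · intro A hA
    rw [Finset.mem_coe, mem_GS] at hA
    apply Finset.erase_insert
    intro h
    have := hA.dom _ _ h
    omega

open Classical in
theorem close_sum (m e : ℕ) (hme : m ≤ e) (X : List (List ℕ)) : ∀ (Z : List (List ℕ)) (acc : List ℕ),
    Valid m (Z ++ X) → (∀ x, x ∈ acc ↔ x ∈ Z.flatten) →
    ((GS m m e (Z ++ X)).filter (fun A => ∃ p ∈ X.flatten, (p, m) ∈ A)).card =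
      ((closesLL acc X).map (fun T => (GS m (m + 1) e T).card)).sum := by
  induction X with
  | nil => intro Z acc _ _; simp [closesLL]
  | cons C X ih =>
    intro Z acc hV hacc
    have hne := hV.ne C (by simp)
    obtain ⟨p, C, rfl⟩ := List.exists_cons_of_ne_nil hne
    have hinc := hV.inc (p :: C) (by simp)
    rw [List.pairwise_cons] at hinc
    have hpw := hV.pw
    rw [List.pairwise_append, List.pairwise_cons] at hpw
    obtain ⟨_, ⟨hpX, _⟩, hpZ⟩ := hpw
    have hlt := hV.lt
    have h3 : ∀ x ∈ X.flatten, x < p := by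
      intro x hx
      obtain ⟨D, hD, hx⟩ := List.mem_flatten.1 hx
      exact hpX D hD p (by simp) x hx
    have hb := close_bij m e p C acc Z X hme hacc hinc.1
      (by
        intro b hb
        obtain ⟨D, hD, hb⟩ := List.mem_flatten.1 ((hacc b).1 hb)
        exact hpZ D hD (p :: C) (by simp) b hb p (by simp))
      h3 (hlt p (by simp)) (fun b hb => hlt b (by simp [hb]))
      (by
        intro b hb
        have := (hacc b).1 hb
        exact hlt b (by rw [List.flatten_append, List.mem_append]; exact Or.inl this))
    have hi := ih (Z ++ [p :: C]) ((p :: C) ++ acc) (by simpa using hV)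
      (by
        intro x
        rw [List.mem_append, hacc, List.flatten_append, List.mem_append]
        simp only [List.flatten_cons, List.flatten_nil, List.append_nil]
        exact or_comm)
    rw [List.append_assoc, List.singleton_append] at hi
    rw [closesLL, List.map_cons, List.sum_cons, ← hi, List.tail_cons, ← hb,
      ← Finset.card_union_of_disjoint]
    · congr 1
      ext A
      simp only [Finset.mem_union, Finset.mem_filter]
      rw [← and_or_left]
      apply and_congr_right
      intro hA
      rw [mem_GS] at hA
      constructor
      · rintro ⟨p', hp', hA'⟩
        rw [List.flatten_cons, List.mem_append, List.mem_cons] at hp'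
        rcases hp' with (rfl | hp') | hp'
        · exact Or.inl hA'
        · exfalso
          obtain ⟨j, hj⟩ := hA.cov p (by simp)
          have := hA.fifo (p :: C) (by simp) p (by simp) p' (by simp [hp']) (hinc.1 p' hp') j m hj hA'
          have := hA.dom _ _ hj
          omega
        · exact Or.inr ⟨p', hp', hA'⟩
      · rintro (h | ⟨p', hp', h⟩)
        · exact ⟨p, by simp, h⟩
        · exact ⟨p', by rw [List.flatten_cons, List.mem_append]; exact Or.inr hp', h⟩
    · rw [Finset.disjoint_left]
      intro A h h'
      rw [Finset.mem_filter, mem_GS] at h h'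
      obtain ⟨p', hp', hA'⟩ := h'.2
      have := h.1.inj2 _ _ _ h.2 hA'
      have := h3 p' hp'
      omega

open Classical in
theorem close_total (m e : ℕ) (hme : m ≤ e) (L : List (List ℕ)) (hL : Valid m L) :
    (GS m m e L).card = (GS m (m + 1) e L).card +
      ((closesLL [] L).map (fun T => (GS m (m + 1) e T).card)).sum := by
  have h := close_sum m e hme L [] [] (by simpa using hL) (by simp)
  rw [List.nil_append] at h
  rw [← h, ← Finset.card_filter_add_card_filter_not (s := GS m m e L)
    (fun A => ∃ p ∈ L.flatten, (p, m) ∈ A), add_comm]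
  congr 2
  ext A
  rw [Finset.mem_filter, mem_GS, mem_GS]
  constructor
  · rintro ⟨hA, hn⟩
    refine ⟨?_, hA.inj1, hA.inj2, hA.cov, hA.fifo, hA.av⟩
    intro i j hij
    have := hA.dom i j hij
    refine ⟨this.1, ?_, this.2.2⟩
    by_contra hlt
    obtain rfl : j = m := by omega
    rcases this.1 with h' | h'
    · exact hn ⟨i, h', hij⟩
    · omega
  · intro hA
    refine ⟨⟨?_, hA.inj1, hA.inj2, hA.cov, hA.fifo, hA.av⟩, ?_⟩
    · intro i j h
      have := hA.dom i j h
      exact ⟨this.1, by omega, this.2.2⟩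
    · rintro ⟨p, _, h⟩
      have := hA.dom _ _ h
      omega

open Classical in
theorem push_total (m e : ℕ) (L : List (List ℕ)) (hL : Valid m L) :
    (GS m (m + 1) e L).card =
      (GS (m + 1) (m + 1) e L).card + (GS (m + 1) (m + 1) e ([m] :: L)).card := by
  rw [← Finset.card_filter_add_card_filter_not (s := GS m (m + 1) e L)
    (fun A => ∃ j, (m, j) ∈ A), add_comm]
  congr 2
  · ext A
    rw [Finset.mem_filter, mem_GS, mem_GS]
    constructor
    · rintro ⟨hA, hn⟩
      refine ⟨?_, hA.inj1, hA.inj2, hA.cov, hA.fifo, hA.av⟩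
      intro i j h
      have := hA.dom i j h
      refine ⟨?_, this.2⟩
      rcases this.1 with h' | h'
      · exact Or.inl h'
      · right
        have : i ≠ m := by rintro rfl; exact hn ⟨j, h⟩
        omega
    · intro hA
      refine ⟨⟨?_, hA.inj1, hA.inj2, hA.cov, hA.fifo, hA.av⟩, ?_⟩
      · intro i j h
        have := hA.dom i j h
        exact ⟨this.1.imp id (fun h => by omega), this.2⟩
      · rintro ⟨j, h⟩
        rcases (hA.dom _ _ h).1 with h' | h'
        · have := hL.lt _ h'; omega
        · omega
  · ext A
    rw [Finset.mem_filter, mem_GS, mem_GS]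
    have hfl : ∀ x, x ∈ ([m] :: L).flatten ↔ x = m ∨ x ∈ L.flatten := by
      intro x; rw [List.flatten_cons, List.mem_append]; simp
    constructor
    · rintro ⟨hA, ⟨j0, hn⟩⟩
      refine ⟨?_, hA.inj1, hA.inj2, ?_, ?_, hA.av⟩
      · intro i j h
        have := hA.dom i j h
        refine ⟨?_, this.2⟩
        rw [hfl]
        rcases this.1 with h' | h'
        · exact Or.inl (Or.inr h')
        · by_cases him : i = m
          · exact Or.inl (Or.inl him)
          · right; omega
      · intro i hi
        rcases (hfl i).1 hi with rfl | hi
        · exact ⟨j0, hn⟩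
        · exact hA.cov i hi
      · intro C hC
        rcases List.mem_cons.1 hC with rfl | hC
        · intro b hb c hc hbc
          simp at hb hc; omega
        · exact hA.fifo C hC
    · intro hA
      refine ⟨⟨?_, hA.inj1, hA.inj2, ?_, ?_, hA.av⟩, ?_⟩
      · intro i j h
        have := hA.dom i j h
        rw [hfl] at this
        refine ⟨?_, this.2⟩
        rcases this.1 with (h | h) | h
        · right; omega
        · exact Or.inl h
        · right; omega
      · intro i hi; exact hA.cov i ((hfl i).2 (Or.inr hi))
      · intro C hC; exact hA.fifo C (List.mem_cons_of_mem _ hC)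
      · exact hA.cov m ((hfl m).2 (Or.inl rfl))

theorem GS_end (e : ℕ) (L : List (List ℕ)) (hL : Valid (e + 1) L) :
    (GS (e + 1) (e + 1) e L).card = if L = [] then 1 else 0 := by
  have hE : ∀ A, Good (e + 1) (e + 1) e L A → A = ∅ := by
    intro A hA
    rw [Finset.eq_empty_iff_forall_notMem]
    rintro ⟨i, j⟩ h
    have := hA.dom i j h
    omega
  split_ifs with h
  · rw [Finset.card_eq_one]
    refine ⟨∅, ?_⟩
    ext A
    rw [mem_GS, Finset.mem_singleton]
    refine ⟨hE A, ?_⟩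
    rintro rfl
    subst h
    constructor <;> simp [Av312]
  · rw [Finset.card_eq_zero, Finset.eq_empty_iff_forall_notMem]
    intro A hA
    rw [mem_GS] at hA
    obtain ⟨C, X, rfl⟩ := List.exists_cons_of_ne_nil h
    obtain ⟨p, C, rfl⟩ := List.exists_cons_of_ne_nil (hL.ne C (by simp))
    obtain ⟨j, hj⟩ := hA.cov p (by simp)
    rw [hE A hA] at hj
    simp at hj

theorem Valid.mono {o o' : ℕ} {L : List (List ℕ)} (h : Valid o L) (ho : o ≤ o') : Valid o' L :=
  ⟨h.ne, h.inc, h.pw, fun x hx => lt_of_lt_of_le (h.lt x hx) ho⟩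

theorem Valid.push {o : ℕ} {L : List (List ℕ)} (h : Valid o L) : Valid (o + 1) ([o] :: L) := by
  refine ⟨?_, ?_, ?_, ?_⟩
  · intro C hC
    rcases List.mem_cons.1 hC with rfl | hC
    · simp
    · exact h.ne C hC
  · intro C hC
    rcases List.mem_cons.1 hC with rfl | hC
    · simp
    · exact h.inc C hC
  · rw [List.pairwise_cons]
    refine ⟨?_, h.pw⟩
    intro D hD x hx y hy
    simp at hx; subst hx
    exact h.lt y (List.mem_flatten.2 ⟨D, hD, hy⟩)
  · intro x hx
    rw [List.flatten_cons, List.mem_append] at hx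
    rcases hx with hx | hx
    · simp at hx; omega
    · have := h.lt x hx; omega

theorem Valid.tail {o : ℕ} {C : List ℕ} {L : List (List ℕ)} (h : Valid o (C :: L)) : Valid o L :=
  ⟨fun D hD => h.ne D (List.mem_cons_of_mem _ hD), fun D hD => h.inc D (List.mem_cons_of_mem _ hD),
    (List.pairwise_cons.1 h.pw).2,
    fun x hx => h.lt x (by rw [List.flatten_cons, List.mem_append]; exact Or.inr hx)⟩

theorem closesLL_valid (m : ℕ) (X : List (List ℕ)) : ∀ acc : List ℕ, Valid m X →
    acc.Pairwise (· < ·) → (∀ x ∈ acc, x < m) → (∀ x ∈ acc, ∀ y ∈ X.flatten, y < x) →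
    ∀ T ∈ closesLL acc X, Valid m T := by
  induction X with
  | nil => intro acc _ _ _ _ T hT; simp [closesLL] at hT
  | cons C X ih =>
    intro acc hV hinc hlt hgt T hT
    have hC : ∀ x ∈ C, x < m := fun x hx => hV.lt x (by simp [hx])
    have hCX : ∀ x ∈ C, ∀ y ∈ X.flatten, y < x := by
      intro x hx y hy
      obtain ⟨D, hD, hy⟩ := List.mem_flatten.1 hy
      exact (List.pairwise_cons.1 hV.pw).1 D hD x hx y hy
    have hCacc : ∀ x ∈ C, ∀ y ∈ acc, x < y := fun x hx y hy => hgt y hy x (by simp [hx])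
    have haX : ∀ x ∈ acc, ∀ y ∈ X.flatten, y < x := fun x hx y hy =>
      hgt x hx y (by rw [List.flatten_cons, List.mem_append]; exact Or.inr hy)
    have hpw : (C ++ acc).Pairwise (· < ·) := by
      rw [List.pairwise_append]
      exact ⟨hV.inc C (by simp), hinc, hCacc⟩
    have hltC : ∀ x ∈ C ++ acc, x < m := by
      intro x hx
      rcases List.mem_append.1 hx with h | h
      · exact hC x h
      · exact hlt x h
    have hgtC : ∀ x ∈ C ++ acc, ∀ y ∈ X.flatten, y < x := by
      intro x hx
      rcases List.mem_append.1 hx with h | h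
      · exact hCX x h
      · exact haX x h
    rw [closesLL, List.mem_cons] at hT
    rcases hT with rfl | hT
    · have hsub : (C.tail ++ acc).Sublist (C ++ acc) :=
        List.Sublist.append_right (List.tail_sublist C) acc
      have hX := hV.tail
      unfold mkL
      split_ifs with h
      · exact hX
      · refine ⟨?_, ?_, ?_, ?_⟩
        · intro D hD
          rcases List.mem_cons.1 hD with rfl | hD
          · exact h
          · exact hX.ne D hD
        · intro D hD
          rcases List.mem_cons.1 hD with rfl | hD
          · exact hpw.sublist hsub
          · exact hX.inc D hD
        · rw [List.pairwise_cons]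
          refine ⟨?_, hX.pw⟩
          intro D hD x hx y hy
          exact hgtC x (hsub.subset hx) y (List.mem_flatten.2 ⟨D, hD, hy⟩)
        · intro x hx
          rw [List.flatten_cons, List.mem_append] at hx
          rcases hx with hx | hx
          · exact hltC x (hsub.subset hx)
          · exact hX.lt x hx
    · exact ih _ hV.tail hpw hltC hgtC T hT

theorem map_length_mkL (l : List ℕ) (X : List (List ℕ)) :
    (mkL l X).map List.length = mkc l.length (X.map List.length) := by
  unfold mkL mkc
  by_cases h : l = []
  · simp [h]
  · simp [h]

theorem closesLL_shape (X : List (List ℕ)) : ∀ acc : List ℕ,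
    (closesLL acc X).map (fun T => T.map List.length) = closes acc.length (X.map List.length) := by
  induction X with
  | nil => intro acc; simp [closesLL, closes]
  | cons C X ih =>
    intro acc
    rw [closesLL, List.map_cons, ih, List.map_cons, closes, map_length_mkL]
    simp [add_comm]

def fW : ℕ → List ℕ → ℕ
  | 0, S => if S = [] then 1 else 0
  | n + 1, S => ((S :: closes 0 S).map (fun T => fW n T + fW n (1 :: T))).sum

theorem GS_fW (e k : ℕ) : ∀ (m : ℕ) (L : List (List ℕ)), m + k = e + 1 → Valid m L →
    (GS m m e L).card = fW k (L.map List.length) := by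
  induction k with
  | zero =>
    intro m L hm hL
    obtain rfl : m = e + 1 := by omega
    rw [GS_end e L hL, fW]
    simp
  | succ k ih =>
    intro m L hm hL
    have step : ∀ T, Valid m T → (GS m (m + 1) e T).card =
        fW k (T.map List.length) + fW k (1 :: T.map List.length) := by
      intro T hT
      rw [push_total m e T hT, ih (m + 1) T (by omega) (hT.mono (by omega)),
        ih (m + 1) ([m] :: T) (by omega) hT.push]
      simp
    rw [close_total m e (by omega) L hL, fW, List.map_cons, List.sum_cons, step L hL]
    congr 1
    have := closesLL_shape L []
    rw [List.length_nil] at this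
    rw [← this, List.map_map]
    congr 1
    apply List.map_congr_left
    intro T hT
    exact step T (closesLL_valid m L [] hL List.Pairwise.nil (by simp) (by simp) T hT)

theorem count_iter (k : ℕ) : ∀ l : List (List ℕ),
    (((fun l => pushL (closeL l))^[k]) l).count [] = (l.map (fW k)).sum := by
  induction k with
  | zero =>
    intro l
    induction l with
    | nil => simp
    | cons S l ih =>
      simp only [Function.iterate_zero, id_eq] at ih ⊢
      rw [List.count_cons, ih, List.map_cons, List.sum_cons, fW]
      simp [add_comm]
  | succ k ih =>
    intro l
    rw [Function.iterate_succ_apply, ih]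
    induction l with
    | nil => simp [pushL, closeL]
    | cons S l ih2 =>
      have hadd : ∀ a b : List (List ℕ), pushL (a ++ b) = pushL a ++ pushL b := by
        intro a b; simp [pushL]
      have hp : ∀ a : List (List ℕ), ((pushL a).map (fW k)).sum =
          (a.map (fun T => fW k T + fW k (1 :: T))).sum := by
        intro a
        induction a with
        | nil => simp [pushL]
        | cons T a iha =>
          rw [← List.singleton_append, hadd, List.map_append, List.sum_append, iha]
          simp [pushL]
      have : closeL (S :: l) = (S :: closes 0 S) ++ closeL l := by simp [closeL]
      rw [this, hadd, List.map_append, List.sum_append, ih2, hp]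
      rfl

theorem Vl_iter (n : ℕ) : Vl n = closeL ((fun l => pushL (closeL l))^[n] [[]]) := by
  induction n with
  | zero => simp [Vl, closeL, closes]
  | succ n ih => rw [Vl, Function.iterate_succ_apply', ih]

theorem GS_count_zero : (GS 1 1 0 []).card = 1 := by
  rw [GS_end 0 [] ⟨by simp, by simp, by simp, by simp⟩]; simp

theorem GS_count (n : ℕ) : (GS 1 1 (n + 1) []).card = (Vl n).count [] := by
  rw [GS_fW (n + 1) (n + 1) 1 [] (by omega) ⟨by simp, by simp, by simp, by simp⟩]
  have h := count_iter (n + 1) [[]]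
  rw [Function.iterate_succ_apply', ← Vl_iter, count_pushL_nil] at h
  rw [h]; simp

open Classical in
noncomputable def arcsOf {n : ℕ} (P : Finpartition (Finset.Icc 1 n)) : Finset (ℕ × ℕ) :=
  (Finset.range (n + 1) ×ˢ Finset.range (n + 1)).filter (fun a => PartArc P a.1 a.2)

theorem part_mem_Icc {n : ℕ} (P : Finpartition (Finset.Icc 1 n)) {B : Finset ℕ} (hB : B ∈ P.parts)
    {i : ℕ} (hi : i ∈ B) : 1 ≤ i ∧ i ≤ n :=
  Finset.mem_Icc.1 (P.le hB hi)

theorem mem_arcsOf {n : ℕ} (P : Finpartition (Finset.Icc 1 n)) (i j : ℕ) :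
    (i, j) ∈ arcsOf P ↔ PartArc P i j := by
  classical
  unfold arcsOf
  rw [Finset.mem_filter]
  refine ⟨fun h => h.2, fun h => ⟨?_, h⟩⟩
  obtain ⟨_, B, hB, hi, hj, _⟩ := h
  have := part_mem_Icc P hB hi
  have := part_mem_Icc P hB hj
  simp; omega

theorem avoids_iff {n : ℕ} (P : Finpartition (Finset.Icc 1 n)) :
    PartAvoids p312 P ↔ Av312 (arcsOf P) := by
  constructor
  · intro h a b c x w y q1 q2 q3 q4 q5 r1 r2 r3
    rw [mem_arcsOf] at r1 r2 r3
    apply h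
    refine ⟨![a, b, c, x, w, y], ?_, ?_⟩
    · rw [Fin.strictMono_iff_lt_succ]
      intro i
      fin_cases i
      · exact q1
      · exact q2
      · exact q3
      · exact q4
      · exact q5
    · intro i
      fin_cases i
      · exact r1
      · exact r2
      · exact r3
  · rintro h ⟨f, hf, harc⟩
    have r1 := harc 0
    have r2 := harc 1
    have r3 := harc 2
    rw [← mem_arcsOf] at r1 r2 r3
    exact h _ _ _ _ _ _ (hf (by decide)) (hf (by decide)) (hf (by decide)) (hf (by decide))
      (hf (by decide)) r1 r2 r3

theorem arcsOf_good {n : ℕ} (P : Finpartition (Finset.Icc 1 n)) (h : Av312 (arcsOf P)) :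
    Good 1 1 n [] (arcsOf P) := by
  refine ⟨?_, ?_, ?_, by simp, by simp, h⟩
  · intro i j hij
    rw [mem_arcsOf] at hij
    obtain ⟨hlt, B, hB, hi, hj, _⟩ := hij
    have := part_mem_Icc P hB hi
    have := part_mem_Icc P hB hj
    exact ⟨Or.inr (by omega), by omega, by omega, hlt⟩
  · intro i j j' hij hij'
    rw [mem_arcsOf] at hij hij'
    obtain ⟨hlt, B, hB, hi, hj, hb⟩ := hij
    obtain ⟨hlt', B', hB', hi', hj', hb'⟩ := hij'
    obtain rfl := P.eq_of_mem_parts hB hB' hi hi'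
    have e1 := hb j' hj'
    have e2 := hb' j hj
    omega
  · intro i i' j hij hij'
    rw [mem_arcsOf] at hij hij'
    obtain ⟨hlt, B, hB, hi, hj, hb⟩ := hij
    obtain ⟨hlt', B', hB', hi', hj', hb'⟩ := hij'
    obtain rfl := P.eq_of_mem_parts hB hB' hj hj'
    have e1 := hb i' hi'
    have e2 := hb' i hi
    omega

def SameB {n : ℕ} (P : Finpartition (Finset.Icc 1 n)) (i j : ℕ) : Prop :=
  ∃ B ∈ P.parts, i ∈ B ∧ j ∈ B

theorem SameB.symm' {n : ℕ} {P : Finpartition (Finset.Icc 1 n)} {i j : ℕ} (h : SameB P i j) :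
    SameB P j i := by
  obtain ⟨B, hB, hi, hj⟩ := h
  exact ⟨B, hB, hj, hi⟩

theorem SameB.trans' {n : ℕ} {P : Finpartition (Finset.Icc 1 n)} {i j k : ℕ} (h : SameB P i j)
    (h' : SameB P j k) : SameB P i k := by
  obtain ⟨B, hB, hi, hj⟩ := h
  obtain ⟨B', hB', hi', hj'⟩ := h'
  obtain rfl := P.eq_of_mem_parts hB hB' hj hi'
  exact ⟨B, hB, hi, hj'⟩

theorem sameB_of_arcs {n : ℕ} (P Q : Finpartition (Finset.Icc 1 n))
    (h : ∀ i j, PartArc P i j → PartArc Q i j) :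
    ∀ j i, i < j → SameB P i j → SameB Q i j := by
  intro j
  induction j using Nat.strong_induction_on with
  | _ j ih =>
    rintro i hij ⟨B, hB, hi, hj⟩
    have hne : (B.filter (· < j)).Nonempty := ⟨i, by simp [hi, hij]⟩
    obtain ⟨k, hk, hmax⟩ := Finset.exists_max_image _ id hne
    rw [Finset.mem_filter] at hk
    have harc : PartArc P k j := by
      refine ⟨hk.2, B, hB, hk.1, hj, ?_⟩
      intro x hx hxx
      have := hmax x (by rw [Finset.mem_filter]; exact ⟨hx, hxx.2⟩)
      simp at this; omega
    have hik : i ≤ k := hmax i (by rw [Finset.mem_filter]; exact ⟨hi, hij⟩)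
    obtain ⟨_, B', hB', hk', hj', _⟩ := h _ _ harc
    have hkj : SameB Q k j := ⟨B', hB', hk', hj'⟩
    rcases hik.eq_or_lt with rfl | hlt
    · exact hkj
    · exact (ih k hk.2 i hlt ⟨B, hB, hi, hk.1⟩).trans' hkj

theorem parts_sub {n : ℕ} (P Q : Finpartition (Finset.Icc 1 n))
    (h : ∀ i j, SameB P i j ↔ SameB Q i j) : P.parts ⊆ Q.parts := by
  intro B hB
  obtain ⟨i, hi⟩ := P.nonempty_of_mem_parts hB
  obtain ⟨B', hB', hi', _⟩ := (h i i).1 ⟨B, hB, hi, hi⟩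
  have : B = B' := by
    ext x
    constructor
    · intro hx
      obtain ⟨D, hD, hiD, hxD⟩ := (h i x).1 ⟨B, hB, hi, hx⟩
      obtain rfl := Q.eq_of_mem_parts hD hB' hiD hi'
      exact hxD
    · intro hx
      obtain ⟨D, hD, hiD, hxD⟩ := (h i x).2 ⟨B', hB', hi', hx⟩
      obtain rfl := P.eq_of_mem_parts hD hB hiD hi
      exact hxD
  rw [this]; exact hB'

theorem arcsOf_inj {n : ℕ} (P Q : Finpartition (Finset.Icc 1 n)) (h : arcsOf P = arcsOf Q) :
    P = Q := by
  have hPQ : ∀ i j, PartArc P i j ↔ PartArc Q i j := by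
    intro i j; rw [← mem_arcsOf, ← mem_arcsOf, h]
  have main : ∀ P Q : Finpartition (Finset.Icc 1 n), (∀ i j, PartArc P i j → PartArc Q i j) →
      ∀ i j, SameB P i j → SameB Q i j := by
    intro P Q h i j hs
    rcases lt_trichotomy i j with hlt | rfl | hlt
    · exact sameB_of_arcs P Q h j i hlt hs
    · obtain ⟨B, hB, hi, _⟩ := hs
      obtain ⟨B', hB', hi'⟩ := Q.exists_mem (P.le hB hi)
      exact ⟨B', hB', hi', hi'⟩
    · exact (sameB_of_arcs P Q h i j hlt hs.symm').symm'
  have hS : ∀ i j, SameB P i j ↔ SameB Q i j := fun i j =>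
    ⟨main P Q (fun i j => (hPQ i j).1) i j, main Q P (fun i j => (hPQ i j).2) i j⟩
  apply Finpartition.ext
  exact Finset.Subset.antisymm (parts_sub P Q hS) (parts_sub Q P (fun i j => (hS i j).symm))

open Relation in
theorem arcsOf_surj {n : ℕ} (A : Finset (ℕ × ℕ)) (hA : Good 1 1 n [] A) :
    ∃ P : Finpartition (Finset.Icc 1 n), arcsOf P = A := by
  classical
  obtain ⟨R, hR⟩ : ∃ R : ℕ → ℕ → Prop, ∀ i j, R i j ↔ (i, j) ∈ A := ⟨fun i j => (i, j) ∈ A, by simp⟩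
  have hU : Relator.RightUnique R := by
    intro a b c h1 h2
    rw [hR] at h1 h2
    exact hA.inj1 _ _ _ h1 h2
  have hU' : Relator.RightUnique (Function.swap R) := by
    intro a b c h1 h2
    simp only [Function.swap] at h1 h2
    rw [hR] at h1 h2
    exact hA.inj2 _ _ _ h1 h2
  have hdom : ∀ i j, R i j → 1 ≤ i ∧ i < j ∧ j ≤ n := by
    intro i j h
    rw [hR] at h
    have := hA.dom i j h
    simp at this
    omega
  have hle : ∀ i j, ReflTransGen R i j → i ≤ j := by
    intro i j h
    induction h with
    | refl => exact le_rfl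
    | tail _ h ih => have := hdom _ _ h; omega
  let s : Setoid ℕ :=
    { r := fun i j => ReflTransGen R i j ∨ ReflTransGen R j i
      iseqv := by
        refine ⟨fun i => Or.inl ReflTransGen.refl, fun h => h.symm, ?_⟩
        intro i j k h h'
        rcases h with h | h <;> rcases h' with h' | h'
        · exact Or.inl (h.trans h')
        · have h1 := reflTransGen_swap.2 h
          have h2 := reflTransGen_swap.2 h'
          rcases ReflTransGen.total_of_right_unique hU' h1 h2 with h3 | h3
          · exact Or.inr (reflTransGen_swap.1 h3)
          · exact Or.inl (reflTransGen_swap.1 h3)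
        · exact ReflTransGen.total_of_right_unique hU h h'
        · exact Or.inr (h'.trans h) }
  let P := Finpartition.ofSetSetoid s (Finset.Icc 1 n)
  have hsame : ∀ i j, (∃ B ∈ P.parts, i ∈ B ∧ j ∈ B) ↔
      i ∈ Finset.Icc 1 n ∧ j ∈ Finset.Icc 1 n ∧ (ReflTransGen R i j ∨ ReflTransGen R j i) := by
    intro i j
    have := Finpartition.mem_part_ofSetSetoid_iff_rel (s := s) (a := i) (Finset.Icc 1 n) (b := j)
    rw [Finpartition.mem_part_iff_exists] at this
    constructor
    · rintro ⟨B, hB, hi, hj⟩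
      exact this.1 ⟨B, hB, hj, hi⟩
    · intro h
      obtain ⟨B, hB, hj, hi⟩ := this.2 h
      exact ⟨B, hB, hi, hj⟩
  refine ⟨P, ?_⟩
  ext ⟨i, j⟩
  rw [mem_arcsOf, ← hR]
  constructor
  · rintro ⟨hlt, B, hB, hi, hj, hb⟩
    obtain ⟨hi', hj', h⟩ := (hsame i j).1 ⟨B, hB, hi, hj⟩
    have h : ReflTransGen R i j := by
      rcases h with h | h
      · exact h
      · have := hle _ _ h; omega
    rcases h.cases_head with rfl | ⟨k, hik, hkj⟩
    · omega
    · have d := hdom _ _ hik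
      have l := hle _ _ hkj
      have hk : k ∈ Finset.Icc 1 n := Finset.mem_Icc.2 (by omega)
      obtain ⟨B', hB', hiB', hkB'⟩ := (hsame i k).2 ⟨hi', hk, Or.inl (ReflTransGen.single hik)⟩
      obtain rfl := P.eq_of_mem_parts hB hB' hi hiB'
      have := hb k hkB'
      obtain rfl : k = j := by omega
      exact hik
  · intro hij
    have d := hdom _ _ hij
    obtain ⟨B, hB, hi, hj⟩ := (hsame i j).2 ⟨Finset.mem_Icc.2 (by omega), Finset.mem_Icc.2 (by omega),
      Or.inl (ReflTransGen.single hij)⟩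
    refine ⟨d.2.1, B, hB, hi, hj, ?_⟩
    rintro x hx ⟨h1, h2⟩
    obtain ⟨_, _, h⟩ := (hsame i x).1 ⟨B, hB, hi, hx⟩
    have h : ReflTransGen R i x := by
      rcases h with h | h
      · exact h
      · have := hle _ _ h; omega
    rcases h.cases_head with rfl | ⟨k, hik, hkx⟩
    · omega
    · obtain rfl := hU hik hij
      have := hle _ _ hkx
      omega

theorem pcount_eq (n : ℕ) : pcount p312 n = (GS 1 1 n []).card := by
  unfold pcount
  rw [← Fintype.card_coe, ← Nat.card_eq_fintype_card]
  refine Nat.card_congr (Equiv.ofBijective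
    (fun P => ⟨arcsOf P.1, mem_GS.2 (arcsOf_good P.1 ((avoids_iff P.1).1 P.2))⟩) ⟨?_, ?_⟩)
  · intro P Q h
    apply Subtype.ext
    apply arcsOf_inj
    exact congrArg Subtype.val h
  · rintro ⟨A, hA⟩
    obtain ⟨P, hP⟩ := arcsOf_surj A (mem_GS.1 hA)
    refine ⟨⟨P, (avoids_iff P).2 ?_⟩, ?_⟩
    · rw [hP]; exact (mem_GS.1 hA).av
    · exact Subtype.ext hP

theorem B312_eq : B312 = 1 + PowerSeries.X * Vs [] := by
  ext n
  cases n with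
  | zero => simp [B312, pcount_eq, GS_count_zero]
  | succ n =>
    rw [map_add, PowerSeries.coeff_succ_X_mul]
    simp [B312, pcount_eq, GS_count, Vs, PowerSeries.coeff_one]

/-- `B(z)` is a root of the cubic
`(z−1)(5z²−2z+1)² B³ + (−9z⁵+54z⁴−85z³+59z²−14z+3) B² + (−9z⁴+60z³−64z²+13z−3) B
  + (−9z³+23z²−4z+1)`. -/
theorem gf_partitions_312_cubic :
    (PowerSeries.X - 1) * (5 * PowerSeries.X ^ 2 - 2 * PowerSeries.X + 1) ^ 2 * B312 ^ 3 +
      (-9 * PowerSeries.X ^ 5 + 54 * PowerSeries.X ^ 4 - 85 * PowerSeries.X ^ 3 +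
        59 * PowerSeries.X ^ 2 - 14 * PowerSeries.X + 3) * B312 ^ 2 +
      (-9 * PowerSeries.X ^ 4 + 60 * PowerSeries.X ^ 3 - 64 * PowerSeries.X ^ 2 +
        13 * PowerSeries.X - 3) * B312 +
      (-9 * PowerSeries.X ^ 3 + 23 * PowerSeries.X ^ 2 - 4 * PowerSeries.X + 1) = 0 := by
  exact final_alg B312 (Vs []) (qc 1 + 1) qq B312_eq V_eq (by simp [qq, qc]) hP_main
end
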